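/- There exists a function f ∈ L¹(ρ) such that the heat maximal function Mf belongs to L¹(ρ) but f does not belong to H¹. -/

import Mathlib

open MeasureTheory Real Filter Set
open scoped ENNReal

noncomputable section

/-- The group `G = ℝ² ⋊ ℝ⁺`, realized as triples `(x₁, x₂, a)` (only `a > 0` is relevant). -/
abbrev G : Type := ℝ × ℝ × ℝ

/-- Group product `(x₁,x₂,a)·(x₁',x₂',a') = (x₁+a x₁', x₂+a x₂', a a')`. -/
def gMul (x y : G) : G := (x.1 + x.2.2 * y.1, x.2.1 + x.2.2 * y.2.1, x.2.2 * y.2.2)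

/-- Group inverse `(x₁,x₂,a)⁻¹ = (−x₁/a, −x₂/a, 1/a)`. -/
def gInv (x : G) : G := (-x.1 / x.2.2, -x.2.1 / x.2.2, 1 / x.2.2)

/-- The identity `e = (0,0,1)`. -/
def gE : G := (0, 0, 1)

/-- The right Haar measure `dρ = a⁻¹ dx₁ dx₂ da` (supported where `a > 0`). -/
def ρG : Measure G :=
  (volume : Measure G).withDensity fun x => ENNReal.ofReal (if 0 < x.2.2 then x.2.2⁻¹ else 0)

/-- The modular function `δ(x₁,x₂,a) = a⁻²`. -/
def deltaG (x : G) : ℝ := (x.2.2 ^ 2)⁻¹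

/-- `|x| = √(x₁² + x₂²)`. -/
def normG (x : G) : ℝ := Real.sqrt (x.1 ^ 2 + x.2.1 ^ 2)

/-- `cosh r(x) = (a + a⁻¹ + a⁻¹|x|²)/2`. -/
def coshArg (x : G) : ℝ := (x.2.2 + x.2.2⁻¹ + x.2.2⁻¹ * (x.1 ^ 2 + x.2.1 ^ 2)) / 2

/-- `r(x) ≥ 0` is determined by `cosh r(x) = coshArg x`; explicitly `r = arcosh (coshArg x)`. -/
def rG (x : G) : ℝ := Real.log (coshArg x + Real.sqrt (coshArg x ^ 2 - 1))

/-- The left-invariant distance `d(x,y) = r(x⁻¹y)`. -/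
def dG (x y : G) : ℝ := rG (gMul (gInv x) y)

/-- The heat kernel
`p_t(x) = (8π^{3/2})⁻¹ δ(x)^{1/2} (r(x)/sinh r(x)) t^{−3/2} exp(−r(x)²/(4t))`,
with `r/sinh r := 1` at `x = e`. -/
def heatK (t : ℝ) (x : G) : ℝ :=
  (8 * Real.pi ^ ((3 : ℝ)/2))⁻¹ * Real.sqrt (deltaG x) *
    (if rG x = 0 then 1 else rG x / Real.sinh (rG x)) *
    t ^ (-(3 : ℝ)/2) * Real.exp (-(rG x ^ 2) / (4 * t))

/-- Convolution `f ∗ p_t(x) = ∫ f(xy⁻¹) p_t(y) dρ(y)`. -/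
def convHeat (f : G → ℝ) (t : ℝ) (x : G) : ℝ := ∫ y, f (gMul x (gInv y)) * heatK t y ∂ρG

/-- The heat maximal operator `Mf(x) = sup_{t>0} |f ∗ p_t(x)|` (valued in `ℝ≥0∞`). -/
def maxHeat (f : G → ℝ) (x : G) : ℝ≥0∞ :=
  ⨆ (t : ℝ) (_ : 0 < t), ENNReal.ofReal |convHeat f t x|

/-- Calderón–Zygmund sets. -/
def IsCZ (R : Set G) : Prop :=
  ∃ c : G, ∃ L r : ℝ, 0 < c.2.2 ∧ 0 < L ∧ 0 < r ∧
    R = Set.Icc (c.1 - L/2) (c.1 + L/2) ×ˢ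
        (Set.Icc (c.2.1 - L/2) (c.2.1 + L/2) ×ˢ
         Set.Icc (c.2.2 * Real.exp (-r)) (c.2.2 * Real.exp r)) ∧
    (r < 1 → Real.exp 2 * c.2.2 * r ≤ L ∧ L < Real.exp 8 * c.2.2 * r) ∧
    (1 ≤ r → c.2.2 * Real.exp (2*r) ≤ L ∧ L < c.2.2 * Real.exp (8*r))

/-- Atoms: `A ∈ L¹(ρ)` supported in a Calderón–Zygmund set `R`, with
`‖A‖_∞ ≤ ρ(R)⁻¹` and `∫ A dρ = 0`. -/
def IsAtomG (A : G → ℝ) : Prop :=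
  Integrable A ρG ∧
  ∃ R : Set G, IsCZ R ∧ (∀ x ∉ R, A x = 0) ∧
    eLpNorm A ⊤ ρG ≤ (ρG R)⁻¹ ∧
    ∫ x, A x ∂ρG = 0

/-- `f = Σ_j lam_j A_j` with atoms `A_j`, `Σ_j |lam_j| < ∞`, converging in `L¹(ρ)`. -/
def IsH1Decomp (f : G → ℝ) (lam : ℕ → ℝ) (A : ℕ → G → ℝ) : Prop :=
  (∀ j, IsAtomG (A j)) ∧ Summable (fun j => |lam j|) ∧
  Tendsto (fun N => eLpNorm (fun x => f x - ∑ j ∈ Finset.range N, lam j * A j x) 1 ρG)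
    atTop (nhds 0)

/-- The Hardy space `H¹`. -/
def MemH1 (f : G → ℝ) : Prop :=
  Integrable f ρG ∧ ∃ lam A, IsH1Decomp f lam A

/-- `‖f‖_{H¹} = inf Σ_j |lam_j|` over all atomic decompositions. -/
def H1norm (f : G → ℝ) : ℝ :=
  sInf {s | ∃ lam A, IsH1Decomp f lam A ∧ s = ∑' j, |lam j|}

/-- The left-invariant vector field `X₀ = a ∂_a`. -/
def X0 (f : G → ℝ) (x : G) : ℝ := x.2.2 * deriv (fun s => f (x.1, x.2.1, s)) x.2.2

/-- The left-invariant vector field `X₁ = a ∂_{x₁}`. -/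
def X1 (f : G → ℝ) (x : G) : ℝ := x.2.2 * deriv (fun s => f (s, x.2.1, x.2.2)) x.1

/-- The left-invariant vector field `X₂ = a ∂_{x₂}`. -/
def X2 (f : G → ℝ) (x : G) : ℝ := x.2.2 * deriv (fun s => f (x.1, s, x.2.2)) x.2.1

/-- `‖∇p_t(x)‖`, the Euclidean norm of `(X₀p_t, X₁p_t, X₂p_t)` at `x`. -/
def gradHeatNorm (t : ℝ) (x : G) : ℝ :=
  Real.sqrt (X0 (heatK t) x ^ 2 + X1 (heatK t) x ^ 2 + X2 (heatK t) x ^ 2)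

/-- The Poisson kernel `q_t(x) = π⁻² δ(x)^{1/2} (r(x)/sinh r(x)) · t/(t²+r(x)²)²`. -/
def poissonK (t : ℝ) (x : G) : ℝ :=
  (Real.pi ^ 2)⁻¹ * Real.sqrt (deltaG x) *
    (if rG x = 0 then 1 else rG x / Real.sinh (rG x)) *
    (t / (t ^ 2 + rG x ^ 2) ^ 2)

/-- Convolution `f ∗ q_t(x) = ∫ f(xy⁻¹) q_t(y) dρ(y)`. -/
def convPoisson (f : G → ℝ) (t : ℝ) (x : G) : ℝ := ∫ y, f (gMul x (gInv y)) * poissonK t y ∂ρG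

/-- The Poisson maximal operator `M̃f(x) = sup_{t>0} |f ∗ q_t(x)|`. -/
def maxPoisson (f : G → ℝ) (x : G) : ℝ≥0∞ :=
  ⨆ (t : ℝ) (_ : 0 < t), ENNReal.ofReal |convPoisson f t x|

/-- `G_{r₁}(x) = sup_{z ∈ B(x,r₁/2)} sup_{t>0} ‖∇p_t(z)‖`. -/
def Gsup (r1 : ℝ) (x : G) : ℝ≥0∞ :=
  ⨆ (z : G) (_ : 0 < z.2.2 ∧ dG x z < r1 / 2) (t : ℝ) (_ : 0 < t),
    ENNReal.ofReal (gradHeatNorm t z)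

/-- `R₀ = [−1,1]×[−1,1]×[e⁻¹,e]`. -/
def R0set : Set G :=
  Set.Icc (-1 : ℝ) 1 ×ˢ (Set.Icc (-1 : ℝ) 1 ×ˢ Set.Icc (Real.exp (-1)) (Real.exp 1))

/-- `R_L = [L−1,L+1]×[−1,1]×[e⁻¹,e]`. -/
def RLset (L : ℝ) : Set G :=
  Set.Icc (L - 1) (L + 1) ×ˢ (Set.Icc (-1 : ℝ) 1 ×ˢ Set.Icc (Real.exp (-1)) (Real.exp 1))

/-- `f_L = χ_{R_L} − χ_{R₀}`. -/
def fL (L : ℝ) : G → ℝ := fun x =>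
  (RLset L).indicator (fun _ => (1 : ℝ)) x - R0set.indicator (fun _ => (1 : ℝ)) x

/-- The mean of `g` over `R` with respect to `ρ`. -/
def czMean (g : G → ℝ) (R : Set G) : ℝ := (∫ x in R, g x ∂ρG) / (ρG R).toReal

/-- `‖g‖_{BMO} = sup_R ρ(R)⁻¹ ∫_R |g − g_R| dρ` over Calderón–Zygmund sets `R`. -/
def czBMO (g : G → ℝ) : ℝ≥0∞ :=
  ⨆ (R : Set G) (_ : IsCZ R),
    (ρG R)⁻¹ * ∫⁻ x in R, ENNReal.ofReal |g x - czMean g R| ∂ρG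

/-- `‖h‖_{BMO(ℝ)} = sup_Q |Q|⁻¹ ∫_Q |h − h_Q|` over bounded intervals `Q ⊂ ℝ`. -/
def lineBMO (h : ℝ → ℝ) : ℝ≥0∞ :=
  ⨆ (a : ℝ) (b : ℝ) (_ : a < b),
    (ENNReal.ofReal (b - a))⁻¹ *
      ∫⁻ s in Set.Icc a b, ENNReal.ofReal |h s - (∫ u in Set.Icc a b, h u) / (b - a)|

/-- `2R₀ = [−2,2]×[−2,2]×[e⁻²,e²]`. -/
def twoR0set : Set G :=
  Set.Icc (-2 : ℝ) 2 ×ˢ (Set.Icc (-2 : ℝ) 2 ×ˢ Set.Icc (Real.exp (-2)) (Real.exp 2))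

/-- The set `{x₁ > 3, |x₂| < 1, e⁻¹ < a < e}`. -/
def domSpecial : Set G :=
  {x : G | 3 < x.1 ∧ |x.2.1| < 1 ∧ Real.exp (-1) < x.2.2 ∧ x.2.2 < Real.exp 1}

/-- The function equal to `1/(x₁ (log x₁)^{3/2})` on `{x₁ > 3, |x₂| < 1, e⁻¹ < a < e}`,
to `c₀` on `R₀`, and `0` elsewhere. -/
def fSpecial (c0 : ℝ) : G → ℝ := fun x =>
  domSpecial.indicator (fun y => (y.1 * Real.log y.1 ^ ((3 : ℝ)/2))⁻¹) x
    + R0set.indicator (fun _ => c0) x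

/-!
Write `f_L = χ_{R_L} - χ_{R₀}`, where `R_L` is the translate of `R₀` by `L` in the first coordinate,
and `f = ∑ⱼ 2⁻ʲ f_{exp (2ʲ)}`.

Near the support of `f_L` the maximal function is bounded by a constant. Far from it, `f_L ∗ p_t` is
an integral of differences of heat kernels whose arguments differ by a translation by `O(L)` in
`x₁`. Their cancellation beyond distance `L` gives `‖M f_L‖₁ ≲ 1 + log (1 + log L)`, hence
`‖M f‖₁ ≲ ∑ⱼ 2⁻ʲ (1 + j) < ∞`.

On the other hand Calderón–Zygmund sets project to intervals in `x₁`, so a function of `x₁` alone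
with bounded mean oscillation on the line pairs boundedly with atoms. The truncations of
`log (1 + |x₁|)` do so uniformly, but their pairing with `f_L` is about `log L` before truncation
sets in, so the pairing with `f` grows like the partial sums of `∑ⱼ 2⁻ʲ 2ʲ = ∞`.
-/

/-! ### The right Haar measure -/

/-- The Haar measure `a⁻¹ da` of the multiplicative group `ℝ⁺`, as a measure on `ℝ`. -/
def mulHaar : Measure ℝ :=
  volume.withDensity fun a => ENNReal.ofReal (if 0 < a then a⁻¹ else 0)

lemma measurable_mulHaar_density :
    Measurable fun a : ℝ => ENNReal.ofReal (if 0 < a then a⁻¹ else 0) :=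
  (Measurable.ite measurableSet_Ioi measurable_inv measurable_const).ennreal_ofReal

instance : SigmaFinite mulHaar := by unfold mulHaar; infer_instance

lemma lintegral_mulHaar (f : ℝ → ℝ≥0∞) : ∫⁻ a, f a ∂mulHaar = ∫⁻ s, f (exp s) := by
  have hcov := lintegral_image_eq_lintegral_abs_deriv_mul MeasurableSet.univ
    (fun x _ => (hasDerivAt_exp x).hasDerivWithinAt) exp_injective.injOn
    (fun a => ENNReal.ofReal (if 0 < a then a⁻¹ else 0) * f a)
  rw [image_univ, range_exp, Measure.restrict_univ] at hcov
  calc ∫⁻ a, f a ∂mulHaar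
      = ∫⁻ a, ENNReal.ofReal (if 0 < a then a⁻¹ else 0) * f a :=
        lintegral_withDensity_eq_lintegral_mul_non_measurable _ measurable_mulHaar_density
          (ae_of_all _ fun _ => ENNReal.ofReal_lt_top) f
    _ = ∫⁻ a in Ioi 0, ENNReal.ofReal (if 0 < a then a⁻¹ else 0) * f a := by
        refine (setLIntegral_eq_of_support_subset fun a ha => ?_).symm
        by_contra hneg
        have hneg : ¬ 0 < a := hneg
        simp [hneg] at ha
    _ = ∫⁻ s, f (exp s) := hcov.trans <| lintegral_congr fun s => by
        rw [if_pos (exp_pos s), ← mul_assoc, ← ENNReal.ofReal_mul (abs_nonneg _),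
          abs_of_pos (exp_pos s), mul_inv_cancel₀ (exp_pos s).ne', ENNReal.ofReal_one, one_mul]

lemma mulHaar_Icc {p q : ℝ} (hp : 0 < p) (hq : 0 < q) :
    mulHaar (Icc p q) = ENNReal.ofReal (log q - log p) := by
  have hlog : (fun s => (Icc p q).indicator (1 : ℝ → ℝ≥0∞) (exp s))
      = (Icc (log p) (log q)).indicator 1 := by
    ext s
    simp only [indicator_apply, mem_Icc, log_le_iff_le_exp hp, le_log_iff_exp_le hq, Pi.one_apply]
  rw [← lintegral_indicator_one measurableSet_Icc, lintegral_mulHaar, hlog,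
    lintegral_indicator_one measurableSet_Icc, volume_Icc]

lemma rhoG_eq_prod : ρG = (volume : Measure ℝ).prod ((volume : Measure ℝ).prod mulHaar) := by
  have hdens : Measurable fun p : ℝ × ℝ => ENNReal.ofReal (if 0 < p.2 then p.2⁻¹ else 0) :=
    measurable_mulHaar_density.comp measurable_snd
  rw [mulHaar, prod_withDensity_right measurable_mulHaar_density, prod_withDensity_right hdens]
  rfl

instance : SigmaFinite ρG := by rw [rhoG_eq_prod]; infer_instance

lemma lintegral_rhoG {F : G → ℝ≥0∞} (hF : Measurable F) :
    ∫⁻ x, F x ∂ρG = ∫⁻ x₁ : ℝ, ∫⁻ x₂ : ℝ, ∫⁻ s : ℝ, F (x₁, x₂, exp s) := by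
  rw [rhoG_eq_prod, lintegral_prod _ hF.aemeasurable]
  refine lintegral_congr fun x₁ => ?_
  rw [lintegral_prod _ (by fun_prop)]
  exact lintegral_congr fun x₂ => lintegral_mulHaar _

lemma lintegral_rhoG_symm {F : G → ℝ≥0∞} (hF : Measurable F) :
    ∫⁻ x, F x ∂ρG = ∫⁻ s : ℝ, ∫⁻ x₂ : ℝ, ∫⁻ x₁ : ℝ, F (x₁, x₂, exp s) := by
  rw [rhoG_eq_prod, lintegral_prod_symm _ hF.aemeasurable,
    lintegral_prod_symm _ hF.lintegral_prod_left'.aemeasurable, lintegral_mulHaar]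

lemma lintegral_rhoG_mul {g₁ g₂ g₃ : ℝ → ℝ≥0∞} (h₁ : Measurable g₁) (h₂ : Measurable g₂)
    (h₃ : Measurable g₃) :
    ∫⁻ x, g₁ x.1 * (g₂ x.2.1 * g₃ x.2.2) ∂ρG
      = (∫⁻ u, g₁ u) * ((∫⁻ u, g₂ u) * ∫⁻ a, g₃ a ∂mulHaar) := by
  rw [rhoG_eq_prod, lintegral_prod_mul (g := fun p : ℝ × ℝ => g₂ p.1 * g₃ p.2) h₁.aemeasurable
    (by fun_prop), lintegral_prod_mul h₂.aemeasurable h₃.aemeasurable]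

lemma rhoG_prod (s t u : Set ℝ) :
    ρG (s ×ˢ (t ×ˢ u)) = volume s * (volume t * mulHaar u) := by
  rw [rhoG_eq_prod, Measure.prod_prod, Measure.prod_prod]

lemma setLIntegral_rhoG_comp_fst {g : ℝ → ℝ≥0∞} (hg : Measurable g) (s : Set ℝ)
    (t : Set (ℝ × ℝ)) :
    ∫⁻ x in s ×ˢ t, g x.1 ∂ρG = (volume : Measure ℝ).prod mulHaar t * ∫⁻ u in s, g u := by
  rw [rhoG_eq_prod, ← Measure.prod_restrict, ← lintegral_map hg measurable_fst]
  have hfst := Measure.map_fst_prod (μ := (volume : Measure ℝ).restrict s)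
    (ν := ((volume : Measure ℝ).prod mulHaar).restrict t)
  rw [hfst, lintegral_smul_measure, Measure.restrict_apply_univ, smul_eq_mul]

lemma ae_rhoG_pos : ∀ᵐ x ∂ρG, 0 < x.2.2 := by
  have hmeas : Measurable fun x : G => ENNReal.ofReal (if 0 < x.2.2 then x.2.2⁻¹ else 0) :=
    measurable_mulHaar_density.comp (measurable_snd.comp measurable_snd)
  refine (ae_withDensity_iff hmeas).2 (ae_of_all _ fun x hx => ?_)
  by_contra hneg
  exact hx (by simp [hneg])

lemma lintegral_rhoG_mono {F H : G → ℝ≥0∞} (h : ∀ x : G, 0 < x.2.2 → F x ≤ H x) :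
    ∫⁻ x, F x ∂ρG ≤ ∫⁻ x, H x ∂ρG :=
  lintegral_mono_ae (ae_rhoG_pos.mono h)

lemma lintegral_comp_add_mul (f : ℝ → ℝ≥0∞) (b : ℝ) {c : ℝ} (hc : c ≠ 0) :
    ∫⁻ u, f (b + c * u) = ENNReal.ofReal |c⁻¹| * ∫⁻ u, f u := by
  have hemb : MeasurableEmbedding fun u : ℝ => c * u := measurableEmbedding_mulLeft₀ hc
  calc ∫⁻ u, f (b + c * u) = ∫⁻ u, f (b + u) ∂(Measure.map (fun u : ℝ => c * u) volume) :=
        (hemb.lintegral_map fun u => f (b + u)).symm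
    _ = ENNReal.ofReal |c⁻¹| * ∫⁻ u, f (b + u) := by
        rw [map_volume_mul_left hc, lintegral_smul_measure, smul_eq_mul]
    _ = ENNReal.ofReal |c⁻¹| * ∫⁻ u, f u := by rw [lintegral_add_left_eq_self f b]

lemma lintegral_lintegral_comp_add_mul (f : ℝ → ℝ → ℝ≥0∞) (b₁ b₂ : ℝ) {c : ℝ} (hc : c ≠ 0) :
    ∫⁻ v, ∫⁻ u, f (b₁ + c * u) (b₂ + c * v) = ENNReal.ofReal (c ^ 2)⁻¹ * ∫⁻ v, ∫⁻ u, f u v := by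
  have hinner (v : ℝ) : ∫⁻ u, f (b₁ + c * u) v = ENNReal.ofReal |c⁻¹| * ∫⁻ u, f u v :=
    lintegral_comp_add_mul (fun u => f u v) b₁ hc
  simp only [hinner]
  rw [lintegral_const_mul' _ _ ENNReal.ofReal_ne_top,
    lintegral_comp_add_mul (fun v => ∫⁻ u, f u v) b₂ hc, ← mul_assoc,
    ← ENNReal.ofReal_mul (abs_nonneg _), ← sq, sq_abs, inv_pow]

lemma lintegral_dilate_fst_snd {F : G → ℝ≥0∞} (hF : Measurable F) {m : ℝ → ℝ} (hm : Measurable m)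
    (hpos : ∀ a, 0 < m a) :
    ∫⁻ x, ENNReal.ofReal (m x.2.2 ^ 2)⁻¹ * F (x.1 / m x.2.2, x.2.1 / m x.2.2, x.2.2) ∂ρG
      = ∫⁻ x, F x ∂ρG := by
  rw [lintegral_rhoG_symm hF, lintegral_rhoG_symm (by fun_prop)]
  refine lintegral_congr fun s => ?_
  have hne : (m (exp s))⁻¹ ≠ 0 := (inv_pos.2 (hpos _)).ne'
  have hscale := lintegral_lintegral_comp_add_mul (fun u v => F (u, v, exp s)) 0 0 hne
  simp only [lintegral_const_mul' _ _ ENNReal.ofReal_ne_top]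
  simp only [zero_add, ← div_eq_inv_mul] at hscale
  rw [hscale, ← mul_assoc, ← ENNReal.ofReal_mul (by positivity), inv_pow, inv_inv,
    inv_mul_cancel₀ (pow_pos (hpos _) 2).ne', ENNReal.ofReal_one, one_mul]

/-! ### Translations and convolution -/

@[fun_prop]
lemma measurable_gMul {α : Type*} [MeasurableSpace α] {f g : α → G} (hf : Measurable f)
    (hg : Measurable g) : Measurable fun p => gMul (f p) (g p) := by
  unfold gMul; fun_prop

@[fun_prop]
lemma measurable_gInv {α : Type*} [MeasurableSpace α] {f : α → G} (hf : Measurable f) :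
    Measurable fun p => gInv (f p) := by
  unfold gInv; fun_prop

lemma gInv_pos {g : G} (hg : 0 < g.2.2) : 0 < (gInv g).2.2 := one_div_pos.2 hg

lemma lintegral_gMul_right {F : G → ℝ≥0∞} (hF : Measurable F) {g : G} (hg : 0 < g.2.2) :
    ∫⁻ x, F (gMul x g) ∂ρG = ∫⁻ x, F x ∂ρG := by
  rw [lintegral_rhoG_symm hF, lintegral_rhoG_symm (by fun_prop),
    ← lintegral_add_right_eq_self (fun s => ∫⁻ x₂ : ℝ, ∫⁻ x₁ : ℝ, F (x₁, x₂, exp s)) (log g.2.2)]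
  refine lintegral_congr fun s => ?_
  have htrans := lintegral_lintegral_comp_add_mul
    (fun u v => F (u, v, exp (s + log g.2.2))) (exp s * g.1) (exp s * g.2.1) one_ne_zero
  simpa [gMul, add_comm, exp_add, exp_log hg] using htrans

@[fun_prop]
lemma measurable_deltaG : Measurable deltaG := by unfold deltaG; fun_prop

lemma lintegral_gMul_gInv {F : G → ℝ≥0∞} (hF : Measurable F) {x : G} (hx : 0 < x.2.2) :
    ∫⁻ y, F (gMul x (gInv y)) ∂ρG = ∫⁻ z, ENNReal.ofReal (deltaG z) * F z ∂ρG := by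
  rw [lintegral_rhoG_symm (by fun_prop), lintegral_rhoG_symm (by fun_prop),
    ← lintegral_sub_left_eq_self (fun s => ∫⁻ x₂ : ℝ, ∫⁻ x₁ : ℝ,
      ENNReal.ofReal (deltaG (x₁, x₂, exp s)) * F (x₁, x₂, exp s)) (log x.2.2)]
  refine lintegral_congr fun s => ?_
  have hexp : exp (log x.2.2 - s) = x.2.2 / exp s := by rw [exp_sub, exp_log hx]
  have hne : -(x.2.2 / exp s) ≠ 0 := (neg_neg_of_pos (by positivity)).ne
  simp only [deltaG, lintegral_const_mul' _ _ ENNReal.ofReal_ne_top, hexp]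
  rw [← neg_sq,
    ← lintegral_lintegral_comp_add_mul (fun u v => F (u, v, x.2.2 / exp s)) x.1 x.2.1 hne]
  refine lintegral_congr fun v => lintegral_congr fun u => ?_
  congr 1
  simp only [gMul, gInv, Prod.mk.injEq]
  refine ⟨?_, ?_, ?_⟩ <;> ring

lemma lintegral_lconv {F Ψ : G → ℝ≥0∞} (hF : Measurable F) (hΨ : Measurable Ψ) :
    ∫⁻ x, ∫⁻ y, F (gMul x (gInv y)) * Ψ y ∂ρG ∂ρG = (∫⁻ x, F x ∂ρG) * ∫⁻ y, Ψ y ∂ρG := by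
  rw [lintegral_lintegral_swap (by fun_prop), ← lintegral_const_mul _ hΨ]
  refine lintegral_congr_ae (ae_rhoG_pos.mono fun y hy => ?_)
  beta_reduce
  rw [lintegral_mul_const _ (by fun_prop), lintegral_gMul_right hF (gInv_pos hy)]

/-! ### Duality of atoms with functions of bounded mean oscillation -/

lemma abs_integral_mul_le_of_lintegral_osc_le {α : Type*} [MeasurableSpace α] {μ : Measure α}
    {A g : α → ℝ} {R : Set α} {K c : ℝ} (hA : Integrable A μ)
    (hAg : Integrable (fun x => A x * g x) μ)
    (hR : MeasurableSet R) (hR₀ : μ R ≠ 0) (hR₁ : μ R ≠ ⊤) (hsupp : ∀ x ∉ R, A x = 0)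
    (hbound : eLpNorm A ⊤ μ ≤ (μ R)⁻¹) (hzero : ∫ x, A x ∂μ = 0) (hK : 0 ≤ K)
    (hosc : ∫⁻ x in R, ENNReal.ofReal |g x - c| ∂μ ≤ ENNReal.ofReal K * μ R) :
    |∫ x, A x * g x ∂μ| ≤ K := by
  have hcancel : ∫ x, A x * g x ∂μ = ∫ x, A x * (g x - c) ∂μ := by
    simp only [mul_sub]
    rw [integral_sub hAg (hA.mul_const c), integral_mul_const, hzero, zero_mul, sub_zero]
  have hpoint : ∀ᵐ x ∂μ, ‖A x * (g x - c)‖ₑ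
      ≤ (μ R)⁻¹ * R.indicator (fun x => ENNReal.ofReal |g x - c|) x := by
    rw [eLpNorm_exponent_top] at hbound
    filter_upwards [enorm_ae_le_eLpNormEssSup A μ] with x hx
    by_cases hxR : x ∈ R
    · rw [indicator_of_mem hxR, enorm_mul, ← enorm_eq_ofReal_abs]
      gcongr
      exact hx.trans hbound
    · simp [hsupp x hxR]
  rw [← ENNReal.ofReal_le_ofReal_iff hK, ← enorm_eq_ofReal_abs, hcancel]
  calc ‖∫ x, A x * (g x - c) ∂μ‖ₑ ≤ ∫⁻ x, ‖A x * (g x - c)‖ₑ ∂μ :=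
        enorm_integral_le_lintegral_enorm _
    _ ≤ ∫⁻ x, (μ R)⁻¹ * R.indicator (fun x => ENNReal.ofReal |g x - c|) x ∂μ :=
        lintegral_mono_ae hpoint
    _ = (μ R)⁻¹ * ∫⁻ x in R, ENNReal.ofReal |g x - c| ∂μ := by
        rw [lintegral_const_mul' _ _ (ENNReal.inv_ne_top.2 hR₀), lintegral_indicator hR]
    _ ≤ (μ R)⁻¹ * (ENNReal.ofReal K * μ R) := by gcongr
    _ = ENNReal.ofReal K := by
        rw [mul_left_comm, ENNReal.inv_mul_cancel hR₀ hR₁, mul_one]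

/-- `φ` has mean oscillation at most `K` on every bounded interval. The oscillation is measured from
an arbitrary constant instead of the mean, which changes the seminorm by a factor at most `2`. -/
def MeanOscLE (φ : ℝ → ℝ) (K : ℝ) : Prop :=
  ∀ p l : ℝ, 0 < l → ∃ c, ∫⁻ u in Icc (p - l / 2) (p + l / 2), ENNReal.ofReal |φ u - c|
    ≤ ENNReal.ofReal (K * l)

lemma IsCZ.exists_eq_Icc_prod {R : Set G} (hR : IsCZ R) :
    ∃ p l : ℝ, ∃ S : Set (ℝ × ℝ), 0 < l ∧ MeasurableSet S
      ∧ (volume : Measure ℝ).prod mulHaar S ≠ 0 ∧ (volume : Measure ℝ).prod mulHaar S ≠ ⊤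
      ∧ R = Icc (p - l / 2) (p + l / 2) ×ˢ S := by
  obtain ⟨c, l, r, hc, hl, hr, rfl, -, -⟩ := hR
  refine ⟨c.1, l, _, hl, measurableSet_Icc.prod measurableSet_Icc, ?_, ?_, rfl⟩
  · rw [Measure.prod_prod, volume_Icc, mulHaar_Icc (by positivity) (by positivity),
      log_mul hc.ne' (exp_pos _).ne', log_mul hc.ne' (exp_pos _).ne', log_exp, log_exp]
    refine mul_ne_zero ?_ ?_ <;> rw [← pos_iff_ne_zero, ENNReal.ofReal_pos] <;> linarith
  · rw [Measure.prod_prod, volume_Icc, mulHaar_Icc (by positivity) (by positivity)]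
    exact ENNReal.mul_ne_top ENNReal.ofReal_ne_top ENNReal.ofReal_ne_top

lemma IsAtomG.abs_integral_mul_comp_fst_le {A : G → ℝ} (hA : IsAtomG A) {φ : ℝ → ℝ}
    (hφ : Measurable φ) {B K : ℝ} (hB : ∀ u, |φ u| ≤ B) (hK : 0 ≤ K) (hosc : MeanOscLE φ K) :
    |∫ x, A x * φ x.1 ∂ρG| ≤ K := by
  obtain ⟨hAint, R, hR, hsupp, hbound, hzero⟩ := hA
  obtain ⟨p, l, S, hl, hS, hS₀, hS₁, rfl⟩ := hR.exists_eq_Icc_prod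
  obtain ⟨c, hc⟩ := hosc p l hl
  have hmeas : ρG (Icc (p - l / 2) (p + l / 2) ×ˢ S)
      = ENNReal.ofReal l * (volume : Measure ℝ).prod mulHaar S := by
    rw [rhoG_eq_prod, Measure.prod_prod, volume_Icc]
    ring_nf
  refine abs_integral_mul_le_of_lintegral_osc_le (g := fun x => φ x.1) (c := c) hAint
    (hAint.mul_bdd (hφ.comp measurable_fst).aestronglyMeasurable (ae_of_all _ fun x => hB x.1))
    (measurableSet_Icc.prod hS) ?_ ?_ hsupp hbound hzero hK ?_
  · rw [hmeas]
    exact mul_ne_zero (ENNReal.ofReal_pos.2 hl).ne' hS₀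
  · rw [hmeas]
    exact ENNReal.mul_ne_top ENNReal.ofReal_ne_top hS₁
  · rw [hmeas, setLIntegral_rhoG_comp_fst (g := fun u => ENNReal.ofReal |φ u - c|) (by fun_prop),
      ← mul_assoc, ← ENNReal.ofReal_mul hK, mul_comm]
    gcongr

lemma tendsto_integral_mul_of_tendsto_eLpNorm {α : Type*} [MeasurableSpace α] {μ : Measure α}
    {f g : α → ℝ} {S : ℕ → α → ℝ} {B : ℝ} (hf : Integrable f μ) (hS : ∀ n, Integrable (S n) μ)
    (hg : AEStronglyMeasurable g μ) (hB : ∀ x, |g x| ≤ B)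
    (hlim : Tendsto (fun n => eLpNorm (fun x => f x - S n x) 1 μ) atTop (nhds 0)) :
    Tendsto (fun n => ∫ x, S n x * g x ∂μ) atTop (nhds (∫ x, f x * g x ∂μ)) := by
  have hbdd : ∀ᵐ x ∂μ, ‖g x‖ ≤ B := ae_of_all _ hB
  refine tendsto_integral_of_L1' _ (hf.mul_bdd hg hbdd).aestronglyMeasurable
    (Eventually.of_forall fun n => (hS n).mul_bdd hg hbdd) ?_
  have hmul := ENNReal.Tendsto.const_mul (a := ENNReal.ofReal B) hlim (.inr ENNReal.ofReal_ne_top)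
  rw [mul_zero] at hmul
  refine tendsto_of_tendsto_of_tendsto_of_le_of_le tendsto_const_nhds hmul (fun _ => zero_le)
    fun n => eLpNorm_le_mul_eLpNorm_of_ae_le_mul (hbdd.mono fun x hx => ?_) 1
  rw [Pi.sub_apply, ← sub_mul, norm_mul, mul_comm, norm_sub_rev]
  gcongr

lemma IsH1Decomp.abs_integral_mul_le {f : G → ℝ} {lam : ℕ → ℝ} {A : ℕ → G → ℝ}
    (h : IsH1Decomp f lam A) (hf : Integrable f ρG) {g : G → ℝ} (hg : Measurable g) {B K : ℝ}
    (hB : ∀ x, |g x| ≤ B) (hK : ∀ a, IsAtomG a → |∫ x, a x * g x ∂ρG| ≤ K) (hK₀ : 0 ≤ K) :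
    |∫ x, f x * g x ∂ρG| ≤ K * ∑' j, |lam j| := by
  obtain ⟨hA, hsum, hlim⟩ := h
  have hterm (j : ℕ) : Integrable (fun x => lam j * A j x) ρG := (hA j).1.const_mul _
  refine le_of_tendsto' (tendsto_integral_mul_of_tendsto_eLpNorm hf
    (fun n => integrable_finsetSum _ fun j _ => hterm j) hg.aestronglyMeasurable hB hlim).abs
    fun n => ?_
  calc |∫ x, (∑ j ∈ Finset.range n, lam j * A j x) * g x ∂ρG|
      = |∑ j ∈ Finset.range n, lam j * ∫ x, A j x * g x ∂ρG| := by
        simp only [Finset.sum_mul]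
        rw [integral_finsetSum _ fun j _ =>
          (hterm j).mul_bdd hg.aestronglyMeasurable (ae_of_all _ hB)]
        simp only [mul_assoc, integral_const_mul]
    _ ≤ ∑ j ∈ Finset.range n, K * |lam j| := by
        refine (Finset.abs_sum_le_sum_abs _ _).trans (Finset.sum_le_sum fun j _ => ?_)
        rw [abs_mul, mul_comm]
        exact mul_le_mul_of_nonneg_right (hK _ (hA j)) (abs_nonneg _)
    _ ≤ K * ∑' j, |lam j| := by
        rw [← Finset.mul_sum]
        gcongr
        exact hsum.sum_le_tsum _ fun j _ => abs_nonneg _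

/-! ### The truncated logarithm -/

/-- The truncation at height `log (1 + N)` of the unbounded `BMO` function `log (1 + |u|)`. -/
def truncLog (N u : ℝ) : ℝ := log (1 + min |u| N)

@[fun_prop]
lemma measurable_truncLog (N : ℝ) : Measurable (truncLog N) :=
  (((measurable_norm (α := ℝ)).min measurable_const).const_add 1).log

lemma abs_truncLog_le {N : ℝ} (hN : 0 ≤ N) (u : ℝ) : |truncLog N u| ≤ log (1 + N) := by
  have hmin : 0 ≤ min |u| N := le_min (abs_nonneg u) hN
  rw [truncLog, abs_of_nonneg (log_nonneg (by linarith))]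
  exact log_le_log (by linarith) (by linarith [min_le_right |u| N])

lemma abs_truncLog_sub_le {N u v : ℝ} (hN : 0 ≤ N) (hu : 0 < |u|) (huv : |u| ≤ |v|) :
    |truncLog N u - truncLog N v| ≤ log |v| - log |u| := by
  have hv : 0 < |v| := hu.trans_le huv
  have hmin : 0 < 1 + min |u| N := by linarith [le_min hu.le hN]
  have hmono : min |u| N ≤ min |v| N := min_le_min_right _ huv
  have hratio : |u| * min |v| N ≤ |v| * min |u| N := by
    rcases le_total |u| N with h | h
    · rw [min_eq_left h, mul_comm |v|]
      gcongr
      exact min_le_left _ _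
    · rw [min_eq_right h]
      gcongr
      exact min_le_right _ _
  rw [abs_sub_comm, truncLog, truncLog, abs_of_nonneg (sub_nonneg.2 (by gcongr)),
    ← log_div (hmin.trans_le (by gcongr)).ne' hmin.ne', ← log_div hv.ne' hu.ne']
  refine log_le_log (by positivity) ?_
  rw [div_le_div_iff₀ hmin hu]
  linarith

lemma lintegral_log_sub_log_abs {m : ℝ} (hm : 0 < m) :
    ∫⁻ u in Icc (-m) m, ENNReal.ofReal (log m - log |u|) = ENNReal.ofReal (2 * m) := by
  have hint : IntervalIntegrable (fun u => log m - log u) volume (-m) m :=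
    intervalIntegrable_const.sub intervalIntegral.intervalIntegrable_log'
  simp only [log_abs]
  rw [← ofReal_integral_eq_lintegral_ofReal, integral_Icc_eq_integral_Ioc,
    ← intervalIntegral.integral_of_le (by linarith), intervalIntegral.integral_sub
      intervalIntegrable_const intervalIntegral.intervalIntegrable_log', integral_log,
    intervalIntegral.integral_const, log_neg_eq_log, smul_eq_mul]
  · ring_nf
  · rwa [intervalIntegrable_iff_integrableOn_Icc_of_le (by linarith)] at hint
  · refine (ae_restrict_iff' measurableSet_Icc).2 ?_
    filter_upwards [Measure.ae_ne volume (0 : ℝ)] with u hu₀ hu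
    rw [Pi.zero_apply, sub_nonneg, ← log_abs u]
    exact log_le_log (abs_pos.2 hu₀) (abs_le.2 hu)

lemma abs_truncLog_sub_le_one {N u v l : ℝ} (hN : 0 ≤ N) (hl : 0 < l) (hu : l ≤ |u|) (hv : l ≤ |v|)
    (huv : |u - v| ≤ l) : |truncLog N u - truncLog N v| ≤ 1 := by
  wlog h : |u| ≤ |v| generalizing u v
  · rw [abs_sub_comm]
    exact this hv hu (by rwa [abs_sub_comm]) (not_le.1 h).le
  have hu₀ : 0 < |u| := hl.trans_le hu
  calc |truncLog N u - truncLog N v| ≤ log |v| - log |u| := abs_truncLog_sub_le hN hu₀ h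
    _ = log (|v| / |u|) := (log_div (hl.trans_le hv).ne' hu₀.ne').symm
    _ ≤ |v| / |u| - 1 := log_le_sub_one_of_pos (div_pos (hl.trans_le hv) hu₀)
    _ ≤ 1 := by
        rw [sub_le_iff_le_add, div_le_iff₀ hu₀]
        linarith [abs_sub_abs_le_abs_sub v u, abs_sub_comm u v]

lemma meanOscLE_truncLog {N : ℝ} (hN : 0 ≤ N) : MeanOscLE (truncLog N) 6 := by
  intro p l hl
  rcases le_or_gt (2 * l) |p| with hp | hp
  · refine ⟨truncLog N p, ?_⟩
    calc ∫⁻ u in Icc (p - l / 2) (p + l / 2), ENNReal.ofReal |truncLog N u - truncLog N p|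
        ≤ ∫⁻ _ in Icc (p - l / 2) (p + l / 2), ENNReal.ofReal 1 := by
          refine setLIntegral_mono' measurableSet_Icc fun u hu => ENNReal.ofReal_le_ofReal ?_
          have hdist : |u - p| ≤ l / 2 := abs_le.2 ⟨by linarith [hu.1], by linarith [hu.2]⟩
          have hsub : |p| - |u| ≤ |u - p| := abs_sub_comm u p ▸ abs_sub_abs_le_abs_sub p u
          exact abs_truncLog_sub_le_one hN hl (by linarith) (by linarith) (by linarith)
      _ ≤ ENNReal.ofReal (6 * l) := by
          rw [setLIntegral_const, volume_Icc, ← ENNReal.ofReal_mul zero_le_one]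
          exact ENNReal.ofReal_le_ofReal (by linarith)
  · refine ⟨truncLog N (3 * l), ?_⟩
    have hsubset : Icc (p - l / 2) (p + l / 2) ⊆ Icc (-(3 * l)) (3 * l) := by
      obtain ⟨hp₁, hp₂⟩ := abs_lt.1 hp
      exact Icc_subset_Icc (by linarith) (by linarith)
    calc ∫⁻ u in Icc (p - l / 2) (p + l / 2), ENNReal.ofReal |truncLog N u - truncLog N (3 * l)|
        ≤ ∫⁻ u in Icc (-(3 * l)) (3 * l), ENNReal.ofReal |truncLog N u - truncLog N (3 * l)| :=
          lintegral_mono_set hsubset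
      _ ≤ ∫⁻ u in Icc (-(3 * l)) (3 * l), ENNReal.ofReal (log (3 * l) - log |u|) := by
          refine lintegral_mono_ae ((ae_restrict_iff' measurableSet_Icc).2 ?_)
          filter_upwards [Measure.ae_ne volume (0 : ℝ)] with u hu₀ hu
          have h3l : |3 * l| = 3 * l := abs_of_pos (by linarith)
          have hle := abs_truncLog_sub_le (v := 3 * l) hN (abs_pos.2 hu₀)
            (h3l.symm ▸ abs_le.2 hu)
          rw [h3l] at hle
          exact ENNReal.ofReal_le_ofReal hle
      _ = ENNReal.ofReal (6 * l) := by rw [lintegral_log_sub_log_abs (by linarith)]; ring_nf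

lemma MemH1.exists_abs_integral_mul_truncLog_le {f : G → ℝ} (hf : MemH1 f) :
    ∃ C : ℝ, ∀ N : ℝ, 0 ≤ N → |∫ x, f x * truncLog N x.1 ∂ρG| ≤ C := by
  obtain ⟨hint, lam, A, hdecomp⟩ := hf
  refine ⟨6 * ∑' j, |lam j|, fun N hN => ?_⟩
  refine hdecomp.abs_integral_mul_le hint (g := fun x => truncLog N x.1) (by fun_prop)
    (fun x => abs_truncLog_le hN x.1) (fun a ha => ?_) (by norm_num)
  exact ha.abs_integral_mul_comp_fst_le (measurable_truncLog N) (abs_truncLog_le hN) (by norm_num)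
    (meanOscLE_truncLog hN)

/-! ### The radial profile of the heat kernel -/

/-- The Gaussian factor `t^{-3/2} e^{-r²/4t}` of the heat kernel. -/
def gaussFactor (t r : ℝ) : ℝ := t ^ (-(3 : ℝ) / 2) * exp (-(r ^ 2) / (4 * t))

lemma gaussFactor_nonneg {t : ℝ} (ht : 0 < t) (r : ℝ) : 0 ≤ gaussFactor t r := by
  unfold gaussFactor; positivity

lemma gaussFactor_eq {t r : ℝ} (ht : 0 < t) (hr : 0 < r) :
    gaussFactor t r = 8 / r ^ 3 * (√(r ^ 2 / (4 * t)) ^ 3 / exp (r ^ 2 / (4 * t))) := by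
  have hpow : t ^ (-(3 : ℝ) / 2) = (√t ^ 3)⁻¹ := by
    rw [sqrt_eq_rpow, ← rpow_natCast, ← rpow_mul ht.le, ← rpow_neg ht.le]
    norm_num
  have hsqrt : √(r ^ 2 / (4 * t)) = r / (2 * √t) := by
    rw [sqrt_div (by positivity), sqrt_sq hr.le, sqrt_mul (by norm_num),
      show (4 : ℝ) = 2 ^ 2 by norm_num, sqrt_sq (by norm_num)]
  have : 0 < √t := sqrt_pos.2 ht
  rw [gaussFactor, hpow, hsqrt, neg_div, exp_neg]
  field_simp
  norm_num

lemma gaussFactor_le {t r : ℝ} (ht : 0 < t) (hr : 0 < r) : gaussFactor t r ≤ 8 / r ^ 3 := by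
  rw [gaussFactor_eq ht hr]
  refine mul_le_of_le_one_right (by positivity) ((div_le_one (exp_pos _)).2 ?_)
  set q := √(r ^ 2 / (4 * t))
  rw [← sq_sqrt (show 0 ≤ r ^ 2 / (4 * t) by positivity)]
  nlinarith [quadratic_le_exp_of_nonneg (sq_nonneg q), mul_nonneg (sq_nonneg q) (sq_nonneg (q - 1))]

lemma gaussFactor_mul_le {t r : ℝ} (ht : 0 < t) (hr : 0 < r) :
    gaussFactor t r * (r ^ 2 / (4 * t)) ≤ 32 / r ^ 3 := by
  rw [gaussFactor_eq ht hr, mul_assoc, show 32 / r ^ 3 = 8 / r ^ 3 * 4 by ring]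
  gcongr
  set q := √(r ^ 2 / (4 * t))
  rw [← sq_sqrt (show 0 ≤ r ^ 2 / (4 * t) by positivity), div_mul_eq_mul_div,
    div_le_iff₀ (exp_pos _)]
  have hsq := pow_div_factorial_le_exp (q ^ 2) (sq_nonneg q) 2
  have hcube := pow_div_factorial_le_exp (q ^ 2) (sq_nonneg q) 3
  norm_num [Nat.factorial] at hsq hcube
  nlinarith [sq_nonneg (q ^ 2 * (q - 1))]

lemma hasDerivAt_mul_gaussFactor (t r : ℝ) :
    HasDerivAt (fun r => r * gaussFactor t r)
      (gaussFactor t r - 2 * (gaussFactor t r * (r ^ 2 / (4 * t)))) r := by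
  have hexponent : HasDerivAt (fun r : ℝ => -(r ^ 2) / (4 * t)) (-(2 * r) / (4 * t)) r := by
    simpa using (hasDerivAt_pow 2 r).neg.div_const (4 * t)
  refine ((hasDerivAt_id r).mul (hexponent.exp.const_mul (t ^ (-(3 : ℝ) / 2)))).congr_deriv ?_
  simp only [id, gaussFactor]
  ring

/-- The function of `u = cosh r(x)` with `p_t(x) = (8π^{3/2})⁻¹ δ(x)^{1/2} heatProfile t u`. -/
def heatProfile (t u : ℝ) : ℝ :=
  (if arcosh u = 0 then 1 else arcosh u / sinh (arcosh u)) * gaussFactor t (arcosh u)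

lemma sqrt_deltaG {y : G} (hy : 0 < y.2.2) : √(deltaG y) = y.2.2⁻¹ := by
  rw [deltaG, sqrt_inv, sqrt_sq hy.le]

lemma heatK_eq {y : G} (hy : 0 < y.2.2) (t : ℝ) :
    heatK t y = (8 * π ^ ((3 : ℝ) / 2))⁻¹ * (y.2.2⁻¹ * heatProfile t (coshArg y)) := by
  have hr : rG y = arcosh (coshArg y) := rfl
  rw [heatK, heatProfile, gaussFactor, sqrt_deltaG hy, hr]
  ring

lemma heatProfile_nonneg {t u : ℝ} (ht : 0 < t) (hu : 1 ≤ u) : 0 ≤ heatProfile t u := by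
  refine mul_nonneg ?_ (gaussFactor_nonneg ht _)
  split_ifs
  · exact zero_le_one
  · exact div_nonneg (arcosh_nonneg hu) (sinh_nonneg_iff.2 (arcosh_nonneg hu))

lemma heatProfile_le_gaussFactor {t u : ℝ} (ht : 0 < t) (hu : 1 ≤ u) :
    heatProfile t u ≤ gaussFactor t (arcosh u) := by
  refine mul_le_of_le_one_left (gaussFactor_nonneg ht _) ?_
  split_ifs with h
  · exact le_rfl
  · have hpos : 0 < arcosh u := (arcosh_nonneg hu).lt_of_ne' h
    exact (div_le_one (sinh_pos_iff.2 hpos)).2 (self_le_sinh_iff.2 hpos.le)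

lemma sub_one_le_arcosh_sq {u : ℝ} (hu : 1 ≤ u) (hu₂ : u ≤ 2) : u - 1 ≤ arcosh u ^ 2 := by
  have hexp : u ≤ exp (arcosh u ^ 2 / 2) := by
    simpa only [cosh_arcosh hu] using cosh_le_exp_half_sq (arcosh u)
  have hlog : log u ≤ arcosh u ^ 2 / 2 := (log_le_iff_le_exp (by linarith)).2 hexp
  have hinv : (u - 1) / 2 ≤ 1 - u⁻¹ := by
    rw [show 1 - u⁻¹ = (u - 1) / u by field_simp]
    exact div_le_div_of_nonneg_left (by linarith) (by linarith) hu₂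
  linarith [one_sub_inv_le_log_of_pos (show 0 < u by linarith)]

lemma log_le_arcosh {u : ℝ} (hu : 0 < u) : log u ≤ arcosh u :=
  log_le_log hu (by linarith [sqrt_nonneg (u ^ 2 - 1)])

lemma half_le_log {u : ℝ} (hu : 2 ≤ u) : 1 / 2 ≤ log u := by
  linarith [log_two_gt_d9, log_le_log (by norm_num) hu]

lemma half_le_sqrt_sq_sub_one {u : ℝ} (hu : 2 ≤ u) : u / 2 ≤ √(u ^ 2 - 1) :=
  le_sqrt_of_sq_le (by nlinarith)

lemma heatProfile_eq {u : ℝ} (hu : 1 < u) (t : ℝ) :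
    heatProfile t u = arcosh u * gaussFactor t (arcosh u) / √(u ^ 2 - 1) := by
  rw [heatProfile, if_neg (arcosh_pos hu).ne', sinh_arcosh hu.le]
  ring

lemma mul_gaussFactor_le {t r : ℝ} (ht : 0 < t) (hr : 0 < r) : r * gaussFactor t r ≤ 8 / r ^ 2 :=
  calc r * gaussFactor t r ≤ r * (8 / r ^ 3) := by gcongr; exact gaussFactor_le ht hr
    _ = 8 / r ^ 2 := by field_simp

lemma heatProfile_le {t u : ℝ} (ht : 0 < t) (hu : 2 ≤ u) :
    heatProfile t u ≤ 16 / (u * log u ^ 2) := by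
  have hlog : 0 < log u := by linarith [half_le_log hu]
  have hr : log u ≤ arcosh u := log_le_arcosh (by linarith)
  calc heatProfile t u = arcosh u * gaussFactor t (arcosh u) / √(u ^ 2 - 1) :=
        heatProfile_eq (by linarith) t
    _ ≤ (8 / log u ^ 2) / (u / 2) := by
        refine div_le_div₀ (by positivity) ((mul_gaussFactor_le ht (hlog.trans_le hr)).trans ?_)
          (by linarith) (half_le_sqrt_sq_sub_one hu)
        gcongr
    _ = 16 / (u * log u ^ 2) := by field_simp; norm_num

lemma hasDerivAt_heatProfile {u : ℝ} (hu : 1 < u) (t : ℝ) :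
    HasDerivAt (heatProfile t)
      ((gaussFactor t (arcosh u) - 2 * (gaussFactor t (arcosh u) * (arcosh u ^ 2 / (4 * t))))
          / √(u ^ 2 - 1) ^ 2
        - arcosh u * gaussFactor t (arcosh u) * u / √(u ^ 2 - 1) ^ 3) u := by
  have hS : 0 < √(u ^ 2 - 1) := sqrt_pos.2 (by nlinarith)
  have hsqrt : HasDerivAt (fun v => √(v ^ 2 - 1)) (u / √(u ^ 2 - 1)) u := by
    refine (((hasDerivAt_pow 2 u).sub_const 1).sqrt (by nlinarith)).congr_deriv ?_
    field_simp
    norm_num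
  have hnum := (hasDerivAt_mul_gaussFactor t (arcosh u)).comp u (hasDerivAt_arcosh hu)
  have heq : heatProfile t =ᶠ[nhds u]
      fun v => arcosh v * gaussFactor t (arcosh v) / √(v ^ 2 - 1) :=
    (eventually_gt_nhds hu).mono fun v hv => heatProfile_eq hv t
  refine ((hnum.div hsqrt hS.ne').congr_of_eventuallyEq heq).congr_deriv ?_
  simp only [Function.comp_apply]
  field_simp

lemma abs_deriv_heatProfile_le {t u : ℝ} (ht : 0 < t) (hu : 2 ≤ u) :
    |deriv (heatProfile t) u| ≤ 640 / (u ^ 2 * log u ^ 2) := by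
  rw [(hasDerivAt_heatProfile (by linarith) t).deriv]
  have hlog := half_le_log hu
  have hr : log u ≤ arcosh u := log_le_arcosh (by linarith)
  have hS : u / 2 ≤ √(u ^ 2 - 1) := half_le_sqrt_sq_sub_one hu
  set r := arcosh u
  set S := √(u ^ 2 - 1)
  have hr₀ : 0 < r := by linarith
  have hγ := gaussFactor_nonneg ht r
  have hnum : |gaussFactor t r - 2 * (gaussFactor t r * (r ^ 2 / (4 * t)))| ≤ 144 / r ^ 2 :=
    calc _ ≤ 8 / r ^ 3 + 2 * (32 / r ^ 3) := by
          have hγr : 0 ≤ gaussFactor t r * (r ^ 2 / (4 * t)) := by positivity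
          rw [abs_le]
          constructor <;> linarith [gaussFactor_le ht hr₀, gaussFactor_mul_le ht hr₀]
      _ = 72 / r ^ 2 * r⁻¹ := by field_simp; norm_num
      _ ≤ 72 / r ^ 2 * 2 := by
          gcongr
          exact inv_le_of_inv_le₀ (by norm_num) (by linarith)
      _ = 144 / r ^ 2 := by ring
  calc _ ≤ |(gaussFactor t r - 2 * (gaussFactor t r * (r ^ 2 / (4 * t)))) / S ^ 2|
        + |r * gaussFactor t r * u / S ^ 3| := abs_sub _ _
    _ ≤ 144 / r ^ 2 / S ^ 2 + 8 / r ^ 2 * u / S ^ 3 := by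
        have hS₀ : 0 < S := by linarith
        rw [abs_div, abs_of_pos (show 0 < S ^ 2 by positivity),
          abs_of_nonneg (show 0 ≤ r * gaussFactor t r * u / S ^ 3 by positivity)]
        gcongr
        exact mul_gaussFactor_le ht hr₀
    _ ≤ 144 / log u ^ 2 / (u / 2) ^ 2 + 8 / log u ^ 2 * u / (u / 2) ^ 3 := by gcongr
    _ = 640 / (u ^ 2 * log u ^ 2) := by field_simp; norm_num

lemma abs_heatProfile_sub_le_of_le {t u v w : ℝ} (ht : 0 < t) (hw : 2 ≤ w) (hu : w ≤ u)
    (hv : w ≤ v) : |heatProfile t v - heatProfile t u| ≤ 640 / (w ^ 2 * log w ^ 2) * |v - u| := by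
  refine (convex_Ici w).norm_image_sub_le_of_norm_deriv_le
    (fun x hx => (hasDerivAt_heatProfile ?_ t).differentiableAt) (fun x hx => ?_) hu hv
  · linarith [mem_Ici.1 hx]
  · have hlog := half_le_log hw
    have hwx : w ≤ x := hx
    refine (abs_deriv_heatProfile_le ht (hw.trans hx)).trans ?_
    gcongr

lemma abs_heatProfile_sub_le {t u v : ℝ} (ht : 0 < t) (hu : 2 ≤ u) (hv : 2 ≤ v)
    (huv : u ≤ 4 * v) :
    |heatProfile t v - heatProfile t u| ≤ 92160 * (|v - u| / (u ^ 2 * log u ^ 2)) := by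
  set w := max 2 (u / 4)
  have hlog := half_le_log hu
  have hu₂ : u ≤ 4 * w := by linarith [le_max_right 2 (u / 4)]
  have hw₂ : 2 ≤ w := le_max_left _ _
  have hlogw : log u / 3 ≤ log w := by
    have h4 : log 4 = 2 * log 2 := by
      rw [show (4 : ℝ) = 2 ^ 2 by norm_num, log_pow]; norm_num
    have := log_le_log (by linarith) hu₂
    rw [log_mul (by norm_num) (by linarith), h4] at this
    linarith [log_le_log (by norm_num) hw₂]
  calc |heatProfile t v - heatProfile t u| ≤ 640 / (w ^ 2 * log w ^ 2) * |v - u| :=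
        abs_heatProfile_sub_le_of_le ht hw₂ (max_le hu (by linarith)) (max_le hv (by linarith))
    _ ≤ 640 / ((u / 4) ^ 2 * (log u / 3) ^ 2) * |v - u| := by gcongr; linarith
    _ = 92160 * (|v - u| / (u ^ 2 * log u ^ 2)) := by
        field_simp
        ring

/-! ### Domination of the heat kernel away from the identity -/

lemma coshArg_eq {y : G} (hy : 0 < y.2.2) :
    coshArg y = (1 + y.2.2 ^ 2 + y.1 ^ 2 + y.2.1 ^ 2) / (2 * y.2.2) := by
  unfold coshArg
  field_simp
  ring

lemma one_le_coshArg {y : G} (hy : 0 < y.2.2) : 1 ≤ coshArg y := by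
  rw [coshArg_eq hy, le_div_iff₀ (by positivity)]
  nlinarith [sq_nonneg (y.2.2 - 1), sq_nonneg y.1, sq_nonneg y.2.1]

@[fun_prop]
lemma measurable_coshArg : Measurable coshArg := by unfold coshArg; fun_prop

@[fun_prop]
lemma measurable_heatK (t : ℝ) : Measurable (heatK t) := by
  have hr : Measurable rG := by unfold rG; fun_prop
  have hfactor : Measurable fun x : G => if rG x = 0 then 1 else rG x / sinh (rG x) :=
    Measurable.ite (measurableSet_eq_fun hr measurable_const) measurable_const (by fun_prop)
  have := measurable_deltaG
  unfold heatK
  fun_prop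

lemma heatConst_le_one : (8 * π ^ ((3 : ℝ) / 2))⁻¹ ≤ 1 :=
  have hπ : 1 ≤ π := by linarith [pi_gt_three]
  inv_le_one_of_one_le₀ (by linarith [one_le_rpow hπ (by norm_num : (0 : ℝ) ≤ 3 / 2)])

lemma heatK_nonneg {t : ℝ} (ht : 0 < t) {y : G} (hy : 0 < y.2.2) : 0 ≤ heatK t y := by
  rw [heatK_eq hy]
  have := heatProfile_nonneg ht (one_le_coshArg hy)
  positivity

lemma heatK_le {t : ℝ} (ht : 0 < t) {y : G} (hy : 0 < y.2.2) :
    heatK t y ≤ y.2.2⁻¹ * heatProfile t (coshArg y) := by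
  rw [heatK_eq hy]
  have := heatProfile_nonneg ht (one_le_coshArg hy)
  exact mul_le_of_le_one_left (by positivity) heatConst_le_one

lemma abs_heatK_sub_le (t : ℝ) {y y' : G} (hy : 0 < y.2.2) (hyy' : y'.2.2 = y.2.2) :
    |heatK t y' - heatK t y| ≤
      y.2.2⁻¹ * |heatProfile t (coshArg y') - heatProfile t (coshArg y)| := by
  rw [heatK_eq hy, heatK_eq (hyy' ▸ hy), hyy', ← mul_sub, ← mul_sub, abs_mul, abs_mul,
    abs_of_pos (inv_pos.2 hy), abs_of_pos (by positivity)]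
  exact mul_le_of_le_one_left (by positivity) heatConst_le_one

/-- The part of the heat kernel carried by `{cosh r ≥ 2}`. -/
def farHeatK (t : ℝ) : G → ℝ := {y | 2 ≤ coshArg y}.indicator (heatK t)

lemma farHeatK_nonneg {t : ℝ} (ht : 0 < t) {y : G} (hy : 0 < y.2.2) : 0 ≤ farHeatK t y :=
  indicator_apply_nonneg fun _ => heatK_nonneg ht hy

/-- The time-independent majorant of the far part of the heat kernel, in the dilated coordinates
`z = (y₁ / max 1 a, y₂ / max 1 a, a)`. -/
def majorantKernel (z : G) : ℝ :=
  (1 + z.1 ^ 2 + z.2.1 ^ 2)⁻¹ * ((1 + log (1 + |z.1|)) ^ 2 + log z.2.2 ^ 2)⁻¹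

/-- The time-independent majorant of the far part of the heat kernel, see `farHeatK_le`. -/
def heatMajorant (y : G) : ℝ :=
  (max 1 y.2.2 ^ 2)⁻¹ * majorantKernel (y.1 / max 1 y.2.2, y.2.1 / max 1 y.2.2, y.2.2)

lemma log_one_add_abs_nonneg (z : ℝ) : 0 ≤ log (1 + |z|) :=
  log_nonneg (by linarith [abs_nonneg z])

lemma majorantKernel_nonneg (z : G) : 0 ≤ majorantKernel z := by
  unfold majorantKernel; positivity

lemma heatMajorant_nonneg (y : G) : 0 ≤ heatMajorant y := by
  have := majorantKernel_nonneg (y.1 / max 1 y.2.2, y.2.1 / max 1 y.2.2, y.2.2)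
  unfold heatMajorant; positivity

lemma exp_abs_log {a : ℝ} (ha : 0 < a) : exp |log a| = max 1 a ^ 2 / a := by
  rcases le_total 1 a with h | h
  · rw [max_eq_right h, abs_of_nonneg (log_nonneg h), exp_log ha]
    field_simp
  · rw [max_eq_left h, abs_of_nonpos (log_nonpos ha.le h), exp_neg, exp_log ha]
    field_simp

lemma max_one_sq_le (a : ℝ) : max 1 a ^ 2 ≤ 1 + a ^ 2 := by
  rcases max_cases 1 a with ⟨h, -⟩ | ⟨h, -⟩ <;> rw [h] <;> nlinarith [sq_nonneg a]

lemma sq_mul_one_add_div_sq_le_coshArg {y : G} (hy : 0 < y.2.2) :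
    max 1 y.2.2 ^ 2 * (1 + (y.1 / max 1 y.2.2) ^ 2 + (y.2.1 / max 1 y.2.2) ^ 2) / 2
      ≤ y.2.2 * coshArg y := by
  have hexpand : max 1 y.2.2 ^ 2 * (1 + (y.1 / max 1 y.2.2) ^ 2 + (y.2.1 / max 1 y.2.2) ^ 2)
      = max 1 y.2.2 ^ 2 + y.1 ^ 2 + y.2.1 ^ 2 := by
    have : (0 : ℝ) < max 1 y.2.2 := by positivity
    field_simp
  have hcosh : y.2.2 * coshArg y = (1 + y.2.2 ^ 2 + y.1 ^ 2 + y.2.1 ^ 2) / 2 := by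
    rw [coshArg_eq hy]; field_simp
  linarith [max_one_sq_le y.2.2]

lemma abs_log_add_log_le_log_coshArg {y : G} (hy : 0 < y.2.2) (hu : 2 ≤ coshArg y) :
    |log y.2.2| + log (1 + |y.1 / max 1 y.2.2|) ≤ 3 * log (coshArg y) := by
  set z := y.1 / max 1 y.2.2
  have hz₀ : 0 < 1 + |z| := by positivity
  have hexp : exp |log y.2.2| * (1 + |z|) ≤ 4 * coshArg y := by
    rw [exp_abs_log hy, div_mul_eq_mul_div, div_le_iff₀ hy]
    have hquad : 1 + |z| ≤ 2 * (1 + z ^ 2 + (y.2.1 / max 1 y.2.2) ^ 2) := by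
      nlinarith [sq_abs z, sq_nonneg (|z| - 1), sq_nonneg (y.2.1 / max 1 y.2.2)]
    have := mul_le_mul_of_nonneg_left hquad (sq_nonneg (max 1 y.2.2))
    linarith [sq_mul_one_add_div_sq_le_coshArg hy]
  have hlog := log_le_log (by positivity) hexp
  have h4 : log 4 = 2 * log 2 := by
    rw [show (4 : ℝ) = 2 ^ 2 by norm_num, log_pow]; norm_num
  rw [log_mul (exp_ne_zero _) hz₀.ne', log_exp, log_mul (by norm_num) (by linarith), h4] at hlog
  linarith [log_le_log (by norm_num) hu]

lemma inv_coshArg_mul_log_sq_le {y : G} (hy : 0 < y.2.2) (hu : 2 ≤ coshArg y) :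
    (y.2.2 * coshArg y * log (coshArg y) ^ 2)⁻¹ ≤ 50 * heatMajorant y := by
  have hsq := sq_mul_one_add_div_sq_le_coshArg hy
  have hsum := abs_log_add_log_le_log_coshArg hy hu
  have hlog := half_le_log hu
  set m := max 1 y.2.2
  have : 0 < m := by positivity
  have hz := log_one_add_abs_nonneg (y.1 / m)
  have hlogsq : ((1 + log (1 + |y.1 / m|)) ^ 2 + log y.2.2 ^ 2) / 25 ≤ log (coshArg y) ^ 2 := by
    have ha := abs_nonneg (log y.2.2)
    have hle : (1 + log (1 + |y.1 / m|) + |log y.2.2|) ^ 2 ≤ (5 * log (coshArg y)) ^ 2 := by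
      gcongr
      linarith
    rw [← sq_abs (log y.2.2)]
    nlinarith [mul_nonneg (show 0 ≤ 1 + log (1 + |y.1 / m|) by linarith) ha]
  calc (y.2.2 * coshArg y * log (coshArg y) ^ 2)⁻¹
      ≤ (m ^ 2 * (1 + (y.1 / m) ^ 2 + (y.2.1 / m) ^ 2) / 2 *
          (((1 + log (1 + |y.1 / m|)) ^ 2 + log y.2.2 ^ 2) / 25))⁻¹ := by gcongr
    _ = 50 * heatMajorant y := by
        change _ = 50 * ((m ^ 2)⁻¹ * ((1 + (y.1 / m) ^ 2 + (y.2.1 / m) ^ 2)⁻¹ *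
          ((1 + log (1 + |y.1 / m|)) ^ 2 + log y.2.2 ^ 2)⁻¹))
        simp only [mul_inv, div_eq_mul_inv]
        ring

lemma farHeatK_le {t : ℝ} (ht : 0 < t) {y : G} (hy : 0 < y.2.2) :
    farHeatK t y ≤ 800 * heatMajorant y := by
  refine indicator_apply_le' (fun hu => ?_)
    fun _ => mul_nonneg (by norm_num) (heatMajorant_nonneg y)
  have hu : 2 ≤ coshArg y := hu
  calc heatK t y ≤ y.2.2⁻¹ * heatProfile t (coshArg y) := heatK_le ht hy
    _ ≤ y.2.2⁻¹ * (16 / (coshArg y * log (coshArg y) ^ 2)) := by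
        gcongr; exact heatProfile_le ht hu
    _ = 16 * (y.2.2 * coshArg y * log (coshArg y) ^ 2)⁻¹ := by
        rw [mul_assoc y.2.2, mul_inv, div_eq_mul_inv]; ring
    _ ≤ 16 * (50 * heatMajorant y) := by gcongr; exact inv_coshArg_mul_log_sq_le hy hu
    _ = 800 * heatMajorant y := by ring

/-- The weight `min 1 (ℓ / |z|)`, which records the gain beyond distance `ℓ` from subtracting
translates by at most `ℓ`; this form avoids dividing by `z = 0`. -/
def decayWeight (ℓ z : ℝ) : ℝ := ℓ / max ℓ |z|

lemma decayWeight_nonneg {ℓ : ℝ} (hℓ : 0 ≤ ℓ) (z : ℝ) : 0 ≤ decayWeight ℓ z := by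
  unfold decayWeight; positivity

lemma one_third_le_decayWeight {ℓ z : ℝ} (hℓ : 0 < ℓ) (hz : |z| ≤ 3 * ℓ) :
    1 / 3 ≤ decayWeight ℓ z := by
  have : max ℓ |z| ≤ 3 * ℓ := max_le (by linarith) hz
  rw [decayWeight, div_le_div_iff₀ (by norm_num) (by positivity)]
  linarith

/-- Dominates the effect on the far part of the heat kernel of a translation by at most `ℓ` in the
first coordinate, see `abs_farHeatK_sub_le`. -/
def shiftMajorant (ℓ : ℝ) (y : G) : ℝ := heatMajorant y * decayWeight ℓ (y.1 / max 1 y.2.2)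

lemma shiftMajorant_nonneg {ℓ : ℝ} (hℓ : 0 ≤ ℓ) (y : G) : 0 ≤ shiftMajorant ℓ y :=
  mul_nonneg (heatMajorant_nonneg y) (decayWeight_nonneg hℓ _)

lemma farHeatK_le_shiftMajorant {t ℓ : ℝ} (ht : 0 < t) (hℓ : 0 < ℓ) {y : G} (hy : 0 < y.2.2)
    (hz : |y.1 / max 1 y.2.2| ≤ 3 * ℓ) : farHeatK t y ≤ 2400 * shiftMajorant ℓ y :=
  calc farHeatK t y ≤ 800 * heatMajorant y := farHeatK_le ht hy
    _ = 2400 * (heatMajorant y * (1 / 3)) := by ring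
    _ ≤ 2400 * shiftMajorant ℓ y := by
        unfold shiftMajorant
        have := heatMajorant_nonneg y
        gcongr
        exact one_third_le_decayWeight hℓ hz

lemma coshArg_le_four_mul_coshArg {y : G} (hy : 0 < y.2.2) {l : ℝ} (hl : 2 * |l| ≤ |y.1|) :
    coshArg y ≤ 4 * coshArg (y.1 - l, y.2) := by
  have hhalf : |y.1| / 2 ≤ |y.1 - l| := by linarith [abs_sub_abs_le_abs_sub y.1 l]
  have hsq : y.1 ^ 2 ≤ 4 * (y.1 - l) ^ 2 := by
    rw [← sq_abs y.1, ← sq_abs (y.1 - l)]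
    nlinarith [abs_nonneg y.1]
  rw [coshArg_eq hy, coshArg_eq (y := (y.1 - l, y.2)) hy, ← mul_div_assoc]
  gcongr
  nlinarith [sq_nonneg y.2.2, sq_nonneg y.2.1]

lemma abs_coshArg_sub_le {y : G} (hy : 0 < y.2.2) (hy₁ : y.1 ≠ 0) {l : ℝ} (hl : 2 * |l| ≤ |y.1|) :
    |coshArg (y.1 - l, y.2) - coshArg y| ≤ 5 / 2 * (|l| / |y.1|) * coshArg y := by
  have : 0 < |y.1| := abs_pos.2 hy₁
  have hsub : coshArg (y.1 - l, y.2) - coshArg y = l * (l - 2 * y.1) / (2 * y.2.2) := by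
    rw [coshArg_eq hy, coshArg_eq (y := (y.1 - l, y.2)) hy, ← sub_div]
    ring
  have hle : |l - 2 * y.1| ≤ 5 / 2 * |y.1| := by
    have := abs_sub l (2 * y.1)
    rw [abs_mul, abs_two] at this
    linarith
  rw [hsub, abs_div, abs_of_pos (show 0 < 2 * y.2.2 by positivity), coshArg_eq hy, ← mul_div_assoc,
    abs_mul]
  refine div_le_div_of_nonneg_right ?_ (by positivity)
  calc |l| * |l - 2 * y.1| ≤ |l| * (5 / 2 * |y.1|) := by gcongr
    _ = 5 / 2 * (|l| / |y.1|) * y.1 ^ 2 := by rw [← sq_abs y.1]; field_simp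
    _ ≤ 5 / 2 * (|l| / |y.1|) * (1 + y.2.2 ^ 2 + y.1 ^ 2 + y.2.1 ^ 2) := by
        gcongr
        nlinarith [sq_nonneg y.2.2, sq_nonneg y.2.1]

lemma eight_le_coshArg {y : G} (hy : 0 < y.2.2) (hy₁ : 4 * max 1 y.2.2 ≤ |y.1|) :
    8 ≤ coshArg y := by
  rw [coshArg_eq hy, le_div_iff₀ (by positivity), ← sq_abs y.1]
  nlinarith [le_max_left 1 y.2.2, le_max_right 1 y.2.2, sq_nonneg y.2.1]

lemma abs_div_abs_le_decayWeight {ℓ l m x : ℝ} (hl : |l| ≤ ℓ) (hm : 1 ≤ m) (hx : ℓ ≤ |x / m|) :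
    |l| / |x| ≤ decayWeight ℓ (x / m) := by
  rw [decayWeight, max_eq_right hx]
  rcases eq_or_ne x 0 with rfl | hx₀
  · simp
  have hdiv : |x / m| ≤ |x| := by
    rw [abs_div, abs_of_pos (show 0 < m by linarith)]
    exact div_le_self (abs_nonneg x) hm
  have : 0 < |x / m| := abs_pos.2 (div_ne_zero hx₀ (by linarith))
  have := (abs_nonneg l).trans hl
  gcongr

lemma abs_farHeatK_sub_le_of_lt {t ℓ l : ℝ} (ht : 0 < t) (hℓ : 2 ≤ ℓ) (hl : |l| ≤ ℓ) {y : G}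
    (hy : 0 < y.2.2) (hz : 2 * ℓ < |y.1 / max 1 y.2.2|) :
    |farHeatK t (y.1 - l, y.2) - farHeatK t y| ≤ 11520000 * shiftMajorant ℓ y := by
  have hm : (1 : ℝ) ≤ max 1 y.2.2 := le_max_left _ _
  have hy₁ : 2 * ℓ * max 1 y.2.2 < |y.1| := by
    rwa [abs_div, abs_of_pos (show (0 : ℝ) < max 1 y.2.2 by positivity),
      lt_div_iff₀ (by positivity)] at hz
  have hly : 2 * |l| ≤ |y.1| := by nlinarith
  have hu : 8 ≤ coshArg y := eight_le_coshArg hy (by nlinarith)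
  have hu' : coshArg y ≤ 4 * coshArg (y.1 - l, y.2) := coshArg_le_four_mul_coshArg hy hly
  have hdiff := abs_coshArg_sub_le hy (abs_pos.1 (show 0 < |y.1| by nlinarith)) hly
  have hweight := abs_div_abs_le_decayWeight hl hm (show ℓ ≤ |y.1 / max 1 y.2.2| by linarith)
  rw [farHeatK, indicator_of_mem (show _ ∈ {y | 2 ≤ coshArg y} from by simp; linarith),
    indicator_of_mem (show y ∈ {y | 2 ≤ coshArg y} from by simp; linarith)]
  set u := coshArg y
  set u' := coshArg (y.1 - l, y.2)
  have hlog := half_le_log (show 2 ≤ u by linarith)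
  calc |heatK t (y.1 - l, y.2) - heatK t y|
      ≤ y.2.2⁻¹ * |heatProfile t u' - heatProfile t u| := abs_heatK_sub_le t hy rfl
    _ ≤ y.2.2⁻¹ * (92160 * (|u' - u| / (u ^ 2 * log u ^ 2))) := by
        gcongr
        exact abs_heatProfile_sub_le ht (by linarith) (by linarith) hu'
    _ ≤ y.2.2⁻¹ * (92160 * (5 / 2 * (|l| / |y.1|) * u / (u ^ 2 * log u ^ 2))) := by gcongr
    _ = 230400 * ((y.2.2 * u * log u ^ 2)⁻¹ * (|l| / |y.1|)) := by
        field_simp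
        ring
    _ ≤ 230400 * (50 * heatMajorant y * decayWeight ℓ (y.1 / max 1 y.2.2)) := by
        have := heatMajorant_nonneg y
        gcongr
        exact inv_coshArg_mul_log_sq_le hy (by linarith)
    _ = 11520000 * shiftMajorant ℓ y := by unfold shiftMajorant; ring

lemma abs_farHeatK_sub_le {t ℓ l : ℝ} (ht : 0 < t) (hℓ : 2 ≤ ℓ) (hl : |l| ≤ ℓ) {y : G}
    (hy : 0 < y.2.2) :
    |farHeatK t (y.1 - l, y.2) - farHeatK t y| ≤
      11520000 * (shiftMajorant ℓ (y.1 - l, y.2) + shiftMajorant ℓ y) := by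
  have hM := shiftMajorant_nonneg (show 0 ≤ ℓ by linarith) y
  have hM' := shiftMajorant_nonneg (show 0 ≤ ℓ by linarith) (y.1 - l, y.2)
  rcases lt_or_ge (2 * ℓ) |y.1 / max 1 y.2.2| with hz | hz
  · linarith [abs_farHeatK_sub_le_of_lt ht hℓ hl hy hz]
  · have hlm : |l / max 1 y.2.2| ≤ ℓ := by
      rw [abs_div, abs_of_pos (show (0 : ℝ) < max 1 y.2.2 by positivity)]
      exact (div_le_self (abs_nonneg l) (le_max_left _ _)).trans hl
    have hz' : |(y.1 - l) / max 1 y.2.2| ≤ 3 * ℓ := by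
      rw [sub_div]
      linarith [abs_sub (y.1 / max 1 y.2.2) (l / max 1 y.2.2)]
    have hfar := farHeatK_le_shiftMajorant ht (by linarith) hy (show _ ≤ 3 * ℓ by linarith)
    have hfar' := farHeatK_le_shiftMajorant (y := (y.1 - l, y.2)) ht (by linarith) hy hz'
    have hpos := farHeatK_nonneg ht hy
    have hpos' := farHeatK_nonneg (y := (y.1 - l, y.2)) ht hy
    rw [abs_le]
    constructor <;> linarith

/-! ### The integral of the majorant -/

lemma setLIntegral_deriv_le_of_mapsTo {f f' : ℝ → ℝ} {s : Set ℝ} {a b : ℝ} (hs : MeasurableSet s)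
    (hf : ∀ x ∈ s, HasDerivAt f (f' x) x) (hmono : MonotoneOn f s) (hmaps : MapsTo f s (Icc a b)) :
    ∫⁻ x in s, ENNReal.ofReal (f' x) ≤ ENNReal.ofReal (b - a) := by
  rw [lintegral_deriv_eq_volume_image_of_monotoneOn hs (fun x hx => (hf x hx).hasDerivWithinAt)
    hmono, ← Real.volume_Icc]
  exact measure_mono hmaps.image_subset

lemma lintegral_inv_sq_add_sq_le {A : ℝ} (hA : 0 < A) :
    ∫⁻ x : ℝ, ENNReal.ofReal (A ^ 2 + x ^ 2)⁻¹ ≤ ENNReal.ofReal (π / A) := by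
  have hderiv (x : ℝ) : HasDerivAt (fun x => arctan (x / A) / A) (A ^ 2 + x ^ 2)⁻¹ x := by
    refine (((hasDerivAt_id x).div_const A).arctan.div_const A).congr_deriv ?_
    simp only [id]
    field_simp
  have hbound := setLIntegral_deriv_le_of_mapsTo (a := -(π / 2) / A) (b := π / 2 / A)
    MeasurableSet.univ (fun x _ => hderiv x)
    (fun x _ y _ hxy => by gcongr) fun x _ =>
      ⟨by gcongr; exact (neg_pi_div_two_lt_arctan _).le,
        by gcongr; exact (arctan_lt_pi_div_two _).le⟩
  rw [Measure.restrict_univ] at hbound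
  exact hbound.trans_eq (by ring_nf)

lemma setLIntegral_inv_mul_log_le (M : ℝ) :
    ∫⁻ x in Ioc 0 M, ENNReal.ofReal ((1 + x) * (1 + log (1 + x)))⁻¹
      ≤ ENNReal.ofReal (log (1 + log (1 + M))) := by
  have hlog {x : ℝ} (hx : x ∈ Ioc 0 M) : 0 ≤ log (1 + x) := log_nonneg (by linarith [hx.1])
  have hmono : MonotoneOn (fun x => log (1 + log (1 + x))) (Ioc 0 M) := fun x hx y _ hxy => by
    have := hlog hx
    have := hx.1
    dsimp only
    gcongr
  refine (setLIntegral_deriv_le_of_mapsTo (a := 0) measurableSet_Ioc (fun x hx => ?_) hmono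
    fun x hx => ⟨log_nonneg (by linarith [hlog hx]), ?_⟩).trans_eq (by rw [sub_zero])
  · have hx₀ : 0 < 1 + x := by linarith [hx.1]
    have := hlog hx
    refine ((((hasDerivAt_id x).const_add 1).log hx₀.ne').const_add 1 |>.log
      (by dsimp only [id]; linarith)).congr_deriv ?_
    simp only [id]
    field_simp
  · have := hlog hx
    have := hx.1
    have := hx.2
    gcongr

lemma setLIntegral_div_sq_le_one {M : ℝ} (hM : 0 < M) :
    ∫⁻ x in Ioi M, ENNReal.ofReal (M / x ^ 2) ≤ 1 := by
  have hpos {x : ℝ} (hx : x ∈ Ioi M) : 0 < x := hM.trans hx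
  have hmono : MonotoneOn (fun x => -(M / x)) (Ioi M) := fun x hx y _ hxy => by
    have := hpos hx
    dsimp only
    gcongr
  refine (setLIntegral_deriv_le_of_mapsTo (a := -1) (b := 0) measurableSet_Ioi (fun x hx => ?_)
    hmono fun x hx => ⟨?_, ?_⟩).trans_eq (by norm_num)
  · have := hpos hx
    refine ((hasDerivAt_inv this.ne').const_mul M).neg.congr_deriv ?_
    field_simp
  · exact neg_le_neg ((div_le_one (hpos hx)).2 (le_of_lt hx))
  · have := hpos hx
    exact neg_nonpos.2 (by positivity)

lemma lintegral_comp_abs (f : ℝ → ℝ≥0∞) : ∫⁻ x, f |x| = 2 * ∫⁻ x in Ioi 0, f x := by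
  have hpos : ∫⁻ x in Ioi 0, f |x| = ∫⁻ x in Ioi 0, f x :=
    setLIntegral_congr_fun measurableSet_Ioi fun x hx => by rw [abs_of_pos hx]
  have hneg : ∫⁻ x in Iic 0, f |x| = ∫⁻ x in Ioi 0, f x := by
    rw [← hpos, setLIntegral_congr Iio_ae_eq_Iic.symm]
    have h := (Measure.measurePreserving_neg (volume : Measure ℝ)).setLIntegral_comp_preimage_emb
      (MeasurableEquiv.neg ℝ).measurableEmbedding (fun x => f |x|) (Iio 0)
    simpa using h.symm
  rw [← lintegral_add_compl (fun x => f |x|) (measurableSet_Ioi (a := (0 : ℝ))), compl_Ioi, hneg,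
    hpos, two_mul]

lemma log_one_add_log_one_add_nonneg {ℓ : ℝ} (hℓ : 0 ≤ ℓ) : 0 ≤ log (1 + log (1 + ℓ)) :=
  log_nonneg (by linarith [log_nonneg (show 1 ≤ 1 + ℓ by linarith)])

lemma lintegral_decayWeight_le {ℓ : ℝ} (hℓ : 0 < ℓ) :
    ∫⁻ z, ENNReal.ofReal (decayWeight ℓ z * ((1 + |z|) * (1 + log (1 + |z|)))⁻¹)
      ≤ 2 * ENNReal.ofReal (log (1 + log (1 + ℓ)) + 1) := by
  have hnear : ∀ x ∈ Ioc 0 ℓ,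
      ENNReal.ofReal (ℓ / max ℓ x * ((1 + x) * (1 + log (1 + x)))⁻¹)
        ≤ ENNReal.ofReal ((1 + x) * (1 + log (1 + x)))⁻¹ := fun x hx => by
    rw [max_eq_left hx.2, div_self hℓ.ne', one_mul]
  have hfar : ∀ x ∈ Ioi ℓ,
      ENNReal.ofReal (ℓ / max ℓ x * ((1 + x) * (1 + log (1 + x)))⁻¹)
        ≤ ENNReal.ofReal (ℓ / x ^ 2) := fun x hx => by
    have hx : ℓ < x := hx
    have := log_nonneg (show 1 ≤ 1 + x by linarith)
    rw [max_eq_right hx.le, sq, ← div_div, div_eq_mul_inv (ℓ / x) x]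
    have : 0 < x := hℓ.trans hx
    gcongr
    nlinarith
  calc _ = 2 * ∫⁻ x in Ioi 0, ENNReal.ofReal (ℓ / max ℓ x * ((1 + x) * (1 + log (1 + x)))⁻¹) :=
        lintegral_comp_abs fun x => ENNReal.ofReal (ℓ / max ℓ x * ((1 + x) * (1 + log (1 + x)))⁻¹)
    _ ≤ 2 * ((∫⁻ x in Ioc 0 ℓ, ENNReal.ofReal ((1 + x) * (1 + log (1 + x)))⁻¹)
          + ∫⁻ x in Ioi ℓ, ENNReal.ofReal (ℓ / x ^ 2)) := by
        rw [← Ioc_union_Ioi_eq_Ioi hℓ.le]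
        gcongr
        exact (lintegral_union_le _ _ _).trans (add_le_add
          (setLIntegral_mono' measurableSet_Ioc hnear) (setLIntegral_mono' measurableSet_Ioi hfar))
    _ ≤ 2 * (ENNReal.ofReal (log (1 + log (1 + ℓ))) + 1) := by
        gcongr
        · exact setLIntegral_inv_mul_log_le ℓ
        · exact setLIntegral_div_sq_le_one hℓ
    _ = 2 * ENNReal.ofReal (log (1 + log (1 + ℓ)) + 1) := by
        rw [ENNReal.ofReal_add (log_one_add_log_one_add_nonneg hℓ.le) zero_le_one,
          ENNReal.ofReal_one]

@[fun_prop]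
lemma measurable_decayWeight (ℓ : ℝ) : Measurable (decayWeight ℓ) := by
  unfold decayWeight; fun_prop

@[fun_prop]
lemma measurable_majorantKernel : Measurable majorantKernel := by
  unfold majorantKernel; fun_prop

lemma lintegral_lintegral_majorantKernel_le (z : ℝ) :
    ∫⁻ z₂, ∫⁻ s, ENNReal.ofReal (majorantKernel (z, z₂, exp s))
      ≤ ENNReal.ofReal (2 * π ^ 2 * ((1 + |z|) * (1 + log (1 + |z|)))⁻¹) := by
  have hlog := log_one_add_abs_nonneg z
  have hA : (1 + |z|) / 2 ≤ √(1 + z ^ 2) :=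
    le_sqrt_of_sq_le (by nlinarith [sq_abs z, sq_nonneg (|z| - 1)])
  set B := 1 + log (1 + |z|)
  set A := √(1 + z ^ 2)
  have hA₀ : 0 < A := lt_of_lt_of_le (by positivity) hA
  have hsplit (z₂ s : ℝ) : ENNReal.ofReal (majorantKernel (z, z₂, exp s))
      = ENNReal.ofReal (A ^ 2 + z₂ ^ 2)⁻¹ * ENNReal.ofReal (B ^ 2 + s ^ 2)⁻¹ := by
    rw [← ENNReal.ofReal_mul (by positivity), sq_sqrt (by positivity)]
    simp only [majorantKernel, log_exp, B]
  calc ∫⁻ z₂, ∫⁻ s, ENNReal.ofReal (majorantKernel (z, z₂, exp s))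
      = (∫⁻ z₂, ENNReal.ofReal (A ^ 2 + z₂ ^ 2)⁻¹) * ∫⁻ s, ENNReal.ofReal (B ^ 2 + s ^ 2)⁻¹ := by
        simp only [hsplit]
        exact lintegral_lintegral_mul (by fun_prop) (by fun_prop)
    _ ≤ ENNReal.ofReal (π / A) * ENNReal.ofReal (π / B) := by
        gcongr <;> exact lintegral_inv_sq_add_sq_le (by linarith)
    _ ≤ ENNReal.ofReal (π / ((1 + |z|) / 2)) * ENNReal.ofReal (π / B) := by gcongr
    _ = ENNReal.ofReal (2 * π ^ 2 * ((1 + |z|) * B)⁻¹) := by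
        rw [← ENNReal.ofReal_mul (by positivity)]
        congr 1
        field_simp

@[fun_prop]
lemma measurable_shiftMajorant (ℓ : ℝ) : Measurable (shiftMajorant ℓ) := by
  unfold shiftMajorant heatMajorant; fun_prop

lemma lintegral_shiftMajorant_le {ℓ : ℝ} (hℓ : 0 < ℓ) :
    ∫⁻ y, ENNReal.ofReal (shiftMajorant ℓ y) ∂ρG
      ≤ ENNReal.ofReal (4 * π ^ 2 * (log (1 + log (1 + ℓ)) + 1)) := by
  have hF : Measurable fun z : G => ENNReal.ofReal (decayWeight ℓ z.1 * majorantKernel z) := by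
    fun_prop
  have hdilate := lintegral_dilate_fst_snd hF (m := max 1) (by fun_prop)
    fun a => lt_max_of_lt_left one_pos
  have hweight (z : ℝ) := decayWeight_nonneg hℓ.le z
  calc ∫⁻ y, ENNReal.ofReal (shiftMajorant ℓ y) ∂ρG
      = ∫⁻ z, ENNReal.ofReal (decayWeight ℓ z.1 * majorantKernel z) ∂ρG := by
        rw [← hdilate]
        refine lintegral_congr fun y => ?_
        rw [← ENNReal.ofReal_mul (by positivity), shiftMajorant, heatMajorant]
        ring_nf
    _ = ∫⁻ z, ENNReal.ofReal (decayWeight ℓ z) *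
          ∫⁻ z₂, ∫⁻ s, ENNReal.ofReal (majorantKernel (z, z₂, exp s)) := by
        rw [lintegral_rhoG hF]
        simp only [ENNReal.ofReal_mul (hweight _),
          lintegral_const_mul' _ _ ENNReal.ofReal_ne_top]
    _ ≤ ∫⁻ z, ENNReal.ofReal (2 * π ^ 2) *
          ENNReal.ofReal (decayWeight ℓ z * ((1 + |z|) * (1 + log (1 + |z|)))⁻¹) := by
        refine lintegral_mono fun z => ?_
        dsimp only
        rw [ENNReal.ofReal_mul (hweight z), mul_left_comm, ← ENNReal.ofReal_mul (by positivity)]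
        gcongr
        exact lintegral_lintegral_majorantKernel_le z
    _ ≤ ENNReal.ofReal (2 * π ^ 2) * (2 * ENNReal.ofReal (log (1 + log (1 + ℓ)) + 1)) := by
        rw [lintegral_const_mul' _ _ ENNReal.ofReal_ne_top]
        gcongr
        exact lintegral_decayWeight_le hℓ
    _ = ENNReal.ofReal (4 * π ^ 2 * (log (1 + log (1 + ℓ)) + 1)) := by
        rw [← ENNReal.ofReal_ofNat 2, ← ENNReal.ofReal_mul zero_le_two,
          ← ENNReal.ofReal_mul (by positivity)]
        ring_nf

/-! ### Convolution over the left Haar measure -/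

/-- The left Haar measure `dλ = δ dρ` of `G`. -/
def leftHaarG : Measure G := ρG.withDensity fun z => ENNReal.ofReal (deltaG z)

lemma lintegral_leftHaarG {F : G → ℝ≥0∞} (hF : Measurable F) :
    ∫⁻ z, F z ∂leftHaarG = ∫⁻ z, ENNReal.ofReal (deltaG z) * F z ∂ρG :=
  lintegral_withDensity_eq_lintegral_mul _ measurable_deltaG.ennreal_ofReal hF

lemma map_gMul_gInv {x : G} (hx : 0 < x.2.2) :
    ρG.map (fun y => gMul x (gInv y)) = leftHaarG := by
  refine Measure.ext_of_lintegral _ fun F hF => ?_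
  rw [lintegral_map hF (by fun_prop), lintegral_gMul_gInv hF hx, lintegral_leftHaarG hF]

lemma gMul_gInv_gMul_gInv {x y : G} (hx : 0 < x.2.2) (hy : 0 < y.2.2) :
    gMul (gInv (gMul x (gInv y))) x = y := by
  ext <;> simp only [gMul, gInv] <;> field_simp <;> ring

lemma convHeat_eq_integral_leftHaarG {f : G → ℝ} (hf : Measurable f) (t : ℝ) {x : G}
    (hx : 0 < x.2.2) :
    convHeat f t x = ∫ z, f z * heatK t (gMul (gInv z) x) ∂leftHaarG := by
  rw [← map_gMul_gInv hx, integral_map (by fun_prop) (by fun_prop)]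
  exact integral_congr_ae (ae_rhoG_pos.mono fun y hy => by
    dsimp only; rw [gMul_gInv_gMul_gInv hx hy])

lemma lintegral_leftHaarG_gMul_gInv {F Ψ : G → ℝ≥0∞} (hF : Measurable F) (hΨ : Measurable Ψ)
    {x : G} (hx : 0 < x.2.2) :
    ∫⁻ z, F z * Ψ (gMul (gInv z) x) ∂leftHaarG = ∫⁻ y, F (gMul x (gInv y)) * Ψ y ∂ρG := by
  rw [← map_gMul_gInv hx, lintegral_map (by fun_prop) (by fun_prop)]
  exact lintegral_congr_ae (ae_rhoG_pos.mono fun y hy => by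
    dsimp only; rw [gMul_gInv_gMul_gInv hx hy])

lemma gMul_assoc (x y z : G) : gMul (gMul x y) z = gMul x (gMul y z) := by
  ext <;> simp only [gMul] <;> ring

lemma measurePreserving_gMul_left {g : G} (hg : 0 < g.2.2) :
    MeasurePreserving (gMul g) leftHaarG leftHaarG := by
  have hone : 0 < gE.2.2 := one_pos
  have hmeas : Measurable (gMul g) := by fun_prop
  refine ⟨hmeas, ?_⟩
  have hcomp : gMul g ∘ (fun y => gMul gE (gInv y)) = fun y => gMul (gMul g gE) (gInv y) :=
    funext fun y => (gMul_assoc g gE (gInv y)).symm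
  rw [← map_gMul_gInv hone, Measure.map_map hmeas (by fun_prop), hcomp, map_gMul_gInv hone,
    map_gMul_gInv (mul_pos hg hone)]

lemma gMul_gInv_pos {x z : G} (hx : 0 < x.2.2) (hz : 0 < z.2.2) :
    0 < (gMul (gInv z) x).2.2 :=
  mul_pos (gInv_pos hz) hx

lemma heatK_gMul_gInv_le {t : ℝ} (ht : 0 < t) {x z : G} (hx : 0 < x.2.2) (hz : 0 < z.2.2) :
    heatK t (gMul (gInv z) x) ≤ t ^ (-(3 : ℝ) / 2) / x.2.2 * z.2.2 := by
  have hy : 0 < (gMul (gInv z) x).2.2 := gMul_gInv_pos hx hz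
  have hu := one_le_coshArg hy
  have hprofile : heatProfile t (coshArg (gMul (gInv z) x)) ≤ t ^ (-(3 : ℝ) / 2) :=
    (heatProfile_le_gaussFactor ht hu).trans
      (mul_le_of_le_one_right (by positivity) (exp_le_one_iff.2 (by
        rw [neg_div]; exact neg_nonpos.2 (by positivity))))
  calc heatK t (gMul (gInv z) x)
      ≤ (gMul (gInv z) x).2.2⁻¹ * heatProfile t (coshArg (gMul (gInv z) x)) := heatK_le ht hy
    _ ≤ (gMul (gInv z) x).2.2⁻¹ * t ^ (-(3 : ℝ) / 2) := by gcongr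
    _ = t ^ (-(3 : ℝ) / 2) / x.2.2 * z.2.2 := by
        simp only [gMul, gInv]
        field_simp

lemma lintegral_enorm_mul_heatK_le {f : G → ℝ} (hf : Measurable f) {t : ℝ} (ht : 0 < t) {x : G}
    (hx : 0 < x.2.2) :
    ∫⁻ z, ‖f z * heatK t (gMul (gInv z) x)‖ₑ ∂leftHaarG
      ≤ ENNReal.ofReal (t ^ (-(3 : ℝ) / 2) / x.2.2) *
        ∫⁻ z, ENNReal.ofReal z.2.2⁻¹ * ‖f z‖ₑ ∂ρG := by
  rw [lintegral_leftHaarG (by fun_prop), ← lintegral_const_mul _ (by fun_prop)]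
  refine lintegral_rhoG_mono fun z hz => ?_
  have hdelta : 0 ≤ deltaG z := inv_nonneg.2 (sq_nonneg _)
  calc ENNReal.ofReal (deltaG z) * ‖f z * heatK t (gMul (gInv z) x)‖ₑ
      = ENNReal.ofReal (deltaG z * heatK t (gMul (gInv z) x)) * ‖f z‖ₑ := by
        rw [enorm_mul, Real.enorm_eq_ofReal (heatK_nonneg ht (gMul_gInv_pos hx hz)),
          ENNReal.ofReal_mul hdelta]
        ring
    _ ≤ ENNReal.ofReal (deltaG z * (t ^ (-(3 : ℝ) / 2) / x.2.2 * z.2.2)) * ‖f z‖ₑ := by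
        gcongr
        exact heatK_gMul_gInv_le ht hx hz
    _ = ENNReal.ofReal (t ^ (-(3 : ℝ) / 2) / x.2.2) * (ENNReal.ofReal z.2.2⁻¹ * ‖f z‖ₑ) := by
        rw [← mul_assoc (ENNReal.ofReal _), ← ENNReal.ofReal_mul (by positivity), deltaG]
        congr 2
        field_simp

lemma integrable_mul_heatK {f : G → ℝ} (hf : Measurable f)
    (hweight : ∫⁻ z, ENNReal.ofReal z.2.2⁻¹ * ‖f z‖ₑ ∂ρG ≠ ⊤) {t : ℝ} (ht : 0 < t) {x : G}
    (hx : 0 < x.2.2) : Integrable (fun z => f z * heatK t (gMul (gInv z) x)) leftHaarG :=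
  ⟨by fun_prop, (lintegral_enorm_mul_heatK_le hf ht hx).trans_lt
    (ENNReal.mul_lt_top ENNReal.ofReal_lt_top hweight.lt_top)⟩

lemma maxHeat_const_mul (c : ℝ) (f : G → ℝ) (x : G) :
    maxHeat (fun z => c * f z) x = ‖c‖ₑ * maxHeat f x := by
  simp only [maxHeat, convHeat, mul_assoc, integral_const_mul, abs_mul,
    ENNReal.ofReal_mul (abs_nonneg c), ENNReal.mul_iSup, Real.enorm_eq_ofReal_abs]

lemma maxHeat_tsum_le {f : ℕ → G → ℝ} (hf : ∀ j, Measurable (f j))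
    (hweight : ∑' j, ∫⁻ z, ENNReal.ofReal z.2.2⁻¹ * ‖f j z‖ₑ ∂ρG ≠ ⊤) {x : G} (hx : 0 < x.2.2) :
    maxHeat (fun z => ∑' j, f j z) x ≤ ∑' j, maxHeat (f j) x := by
  have hmeas : Measurable fun z => ∑' j, f j z := Measurable.tsum hf
  refine iSup₂_le fun t ht => ?_
  have hfinite : ∑' j, ∫⁻ z, ‖f j z * heatK t (gMul (gInv z) x)‖ₑ ∂leftHaarG ≠ ⊤ := by
    refine ne_top_of_le_ne_top (ENNReal.mul_ne_top ENNReal.ofReal_ne_top hweight)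
      ((ENNReal.tsum_le_tsum fun j => lintegral_enorm_mul_heatK_le (hf j) ht hx).trans_eq
        ENNReal.tsum_mul_left)
  have hconv : convHeat (fun z => ∑' j, f j z) t x = ∑' j, convHeat (f j) t x := by
    simp only [convHeat_eq_integral_leftHaarG hmeas t hx,
      convHeat_eq_integral_leftHaarG (hf _) t hx, ← tsum_mul_right]
    exact integral_tsum (fun j => by have := hf j; fun_prop) hfinite
  rw [hconv, ← Real.enorm_eq_ofReal_abs]
  refine enorm_tsum_le_tsum_enorm.trans (ENNReal.tsum_le_tsum fun j => ?_)
  rw [Real.enorm_eq_ofReal_abs]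
  exact le_iSup₂ (f := fun (s : ℝ) (_ : 0 < s) => ENNReal.ofReal |convHeat (f j) s x|) t ht

/-! ### The near part of the heat kernel -/

/-- The part of the heat kernel close to the identity, complementary to `farHeatK`. -/
def nearHeatK (t : ℝ) : G → ℝ := {y | coshArg y < 2}.indicator (heatK t)

@[fun_prop]
lemma measurable_nearHeatK (t : ℝ) : Measurable (nearHeatK t) :=
  (measurable_heatK t).indicator (measurableSet_lt measurable_coshArg measurable_const)

lemma nearHeatK_nonneg {t : ℝ} (ht : 0 < t) {y : G} (hy : 0 < y.2.2) : 0 ≤ nearHeatK t y :=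
  indicator_apply_nonneg fun _ => heatK_nonneg ht hy

lemma nearHeatK_add_farHeatK (t : ℝ) (y : G) : nearHeatK t y + farHeatK t y = heatK t y := by
  rcases lt_or_ge (coshArg y) 2 with h | h
  · simp [nearHeatK, farHeatK, h]
  · simp [nearHeatK, farHeatK, h]

lemma mem_box_of_coshArg_lt_two {y : G} (hy : 0 < y.2.2) (hu : coshArg y < 2) :
    y ∈ Icc (-4 : ℝ) 4 ×ˢ (Icc (-4 : ℝ) 4 ×ˢ Icc (1 / 4 : ℝ) 4) := by
  rw [coshArg_eq hy, div_lt_iff₀ (by positivity)] at hu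
  have := sq_nonneg y.1
  have := sq_nonneg y.2.1
  have h₃ : y.2.2 ≤ 4 := by nlinarith
  refine ⟨abs_le.1 (abs_le_of_sq_le_sq ?_ ?_), abs_le.1 (abs_le_of_sq_le_sq ?_ ?_), ?_, h₃⟩ <;>
    nlinarith

lemma one_add_sq_div_two_le_cosh (s : ℝ) : 1 + s ^ 2 / 2 ≤ cosh s := by
  have hsinh : (s / 2) ^ 2 ≤ sinh (s / 2) ^ 2 := by
    rw [← sq_abs, ← sq_abs (sinh _), abs_sinh]
    gcongr
    exact self_le_sinh_iff.2 (abs_nonneg _)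
  have hcosh := cosh_two_mul (s / 2)
  rw [mul_div_cancel₀ s two_ne_zero, cosh_sq] at hcosh
  linarith

lemma sq_add_sq_add_log_sq_le {y : G} (hy : 0 < y.2.2) (hu : coshArg y < 2) :
    y.1 ^ 2 + (y.2.1 ^ 2 + log y.2.2 ^ 2) ≤ 8 * arcosh (coshArg y) ^ 2 := by
  have hy₄ : 4⁻¹ ≤ y.2.2⁻¹ := by gcongr; exact (mem_box_of_coshArg_lt_two hy hu).2.2.2
  have hcosh : 1 + log y.2.2 ^ 2 / 2 ≤ (y.2.2 + y.2.2⁻¹) / 2 := by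
    rw [← cosh_log hy]
    exact one_add_sq_div_two_le_cosh _
  have harcosh := sub_one_le_arcosh_sq (one_le_coshArg hy) hu.le
  have hnorm : 4⁻¹ * (y.1 ^ 2 + y.2.1 ^ 2) ≤ y.2.2⁻¹ * (y.1 ^ 2 + y.2.1 ^ 2) := by gcongr
  unfold coshArg at harcosh ⊢
  nlinarith [sq_nonneg (log y.2.2)]

lemma nearHeatK_le {t : ℝ} (ht : 0 < t) {y : G} (hy : 0 < y.2.2) :
    nearHeatK t y ≤ 4 * t ^ (-(3 : ℝ) / 2) * (exp (-(32 * t)⁻¹ * y.1 ^ 2) *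
      (exp (-(32 * t)⁻¹ * y.2.1 ^ 2) * exp (-(32 * t)⁻¹ * log y.2.2 ^ 2))) := by
  by_cases hu : coshArg y < 2
  swap
  · rw [nearHeatK, indicator_of_notMem (by simpa using hu)]
    positivity
  have hu₁ := one_le_coshArg hy
  have hinv : y.2.2⁻¹ ≤ 4 := inv_le_of_inv_le₀ four_pos
    (by simpa using (mem_box_of_coshArg_lt_two hy hu).2.2.1)
  have hexp : -(arcosh (coshArg y) ^ 2) / (4 * t)
      ≤ -(32 * t)⁻¹ * y.1 ^ 2 + (-(32 * t)⁻¹ * y.2.1 ^ 2 + -(32 * t)⁻¹ * log y.2.2 ^ 2) := by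
    have := sq_add_sq_add_log_sq_le hy hu
    calc -(arcosh (coshArg y) ^ 2) / (4 * t) = -(32 * t)⁻¹ * (8 * arcosh (coshArg y) ^ 2) := by
          field_simp; ring
      _ ≤ -(32 * t)⁻¹ * (y.1 ^ 2 + (y.2.1 ^ 2 + log y.2.2 ^ 2)) :=
          mul_le_mul_of_nonpos_left this (neg_nonpos.2 (by positivity))
      _ = _ := by ring
  calc nearHeatK t y = heatK t y := indicator_of_mem (s := {y | coshArg y < 2}) hu _
    _ ≤ y.2.2⁻¹ * heatProfile t (coshArg y) := heatK_le ht hy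
    _ ≤ 4 * gaussFactor t (arcosh (coshArg y)) := by
        have := heatProfile_nonneg ht hu₁
        gcongr
        exact heatProfile_le_gaussFactor ht hu₁
    _ ≤ _ := by
        rw [gaussFactor, ← exp_add, ← exp_add, mul_assoc]
        gcongr

lemma lintegral_ofReal_exp_neg_mul_sq {b : ℝ} (hb : 0 < b) :
    ∫⁻ u : ℝ, ENNReal.ofReal (exp (-b * u ^ 2)) = ENNReal.ofReal √(π / b) := by
  rw [← integral_gaussian, ofReal_integral_eq_lintegral_ofReal (integrable_exp_neg_mul_sq hb)]
  exact ae_of_all _ fun u => (exp_pos _).le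

lemma lintegral_nearHeatK_le {t : ℝ} (ht : 0 < t) :
    ∫⁻ y, ENNReal.ofReal (nearHeatK t y) ∂ρG ≤ ENNReal.ofReal (4 * √(32 * π) ^ 3) := by
  have hpow : t ^ (-(3 : ℝ) / 2) * √t ^ 3 = 1 := by
    rw [sqrt_eq_rpow, ← rpow_natCast, ← rpow_mul ht.le, ← rpow_add ht]
    norm_num
  set b := (32 * t)⁻¹ with hb
  have hb₀ : 0 < b := by positivity
  have hsqrt : √(π / b) = √(32 * π) * √t := by
    rw [← sqrt_mul (by positivity), hb, div_inv_eq_mul]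
    ring_nf
  calc ∫⁻ y, ENNReal.ofReal (nearHeatK t y) ∂ρG
      ≤ ∫⁻ y, ENNReal.ofReal (4 * t ^ (-(3 : ℝ) / 2)) * (ENNReal.ofReal (exp (-b * y.1 ^ 2)) *
          (ENNReal.ofReal (exp (-b * y.2.1 ^ 2)) * ENNReal.ofReal (exp (-b * log y.2.2 ^ 2))))
          ∂ρG := by
        refine lintegral_rhoG_mono fun y hy => ?_
        rw [← ENNReal.ofReal_mul (by positivity), ← ENNReal.ofReal_mul (by positivity),
          ← ENNReal.ofReal_mul (by positivity)]
        exact ENNReal.ofReal_le_ofReal (nearHeatK_le ht hy)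
    _ = ENNReal.ofReal (4 * t ^ (-(3 : ℝ) / 2)) *
          (ENNReal.ofReal √(π / b) * (ENNReal.ofReal √(π / b) * ENNReal.ofReal √(π / b))) := by
        rw [lintegral_const_mul' _ _ ENNReal.ofReal_ne_top,
          lintegral_rhoG_mul (g₁ := fun u => ENNReal.ofReal (exp (-b * u ^ 2)))
            (g₂ := fun u => ENNReal.ofReal (exp (-b * u ^ 2)))
            (g₃ := fun a => ENNReal.ofReal (exp (-b * log a ^ 2)))
            (by fun_prop) (by fun_prop) (by fun_prop), lintegral_mulHaar]
        simp only [log_exp, lintegral_ofReal_exp_neg_mul_sq hb₀]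
    _ = ENNReal.ofReal (4 * √(32 * π) ^ 3) := by
        rw [← ENNReal.ofReal_mul (by positivity), ← ENNReal.ofReal_mul (by positivity),
          ← ENNReal.ofReal_mul (by positivity), hsqrt]
        congr 1
        linear_combination 4 * √(32 * π) ^ 3 * hpow

/-! ### The maximal function of `f_L` -/

lemma RLset_zero : RLset 0 = R0set := by simp [RLset, R0set]

@[measurability]
lemma measurableSet_RLset (b : ℝ) : MeasurableSet (RLset b) :=
  measurableSet_Icc.prod (measurableSet_Icc.prod measurableSet_Icc)

lemma rhoG_RLset (b : ℝ) : ρG (RLset b) = 8 := by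
  rw [RLset, rhoG_prod, Real.volume_Icc, Real.volume_Icc, mulHaar_Icc (exp_pos _) (exp_pos _),
    log_exp, log_exp]
  ring_nf
  rw [ENNReal.ofReal_ofNat]
  norm_num

lemma mem_Icc_of_mem_RLset {b : ℝ} {z : G} (hz : z ∈ RLset b) : z.2.2 ∈ Icc (1 / 3 : ℝ) 3 := by
  have hexp : exp 1 ≤ 3 := exp_one_lt_three.le
  refine ⟨le_trans ?_ hz.2.2.1, hz.2.2.2.trans hexp⟩
  rw [exp_neg, one_div]
  gcongr

lemma pos_of_mem_RLset {b : ℝ} {z : G} (hz : z ∈ RLset b) : 0 < z.2.2 :=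
  lt_of_lt_of_le (by norm_num) (mem_Icc_of_mem_RLset hz).1

/-- A box outside of which `χ_{R_b} ∗ nearHeatK t` vanishes. -/
def nearBox (b : ℝ) : Set G :=
  Icc (b - 13) (b + 13) ×ˢ (Icc (-13 : ℝ) 13 ×ˢ Icc (1 / 12 : ℝ) 12)

lemma measurableSet_nearBox (b : ℝ) : MeasurableSet (nearBox b) :=
  measurableSet_Icc.prod (measurableSet_Icc.prod measurableSet_Icc)

lemma rhoG_nearBox (b : ℝ) : ρG (nearBox b) = ENNReal.ofReal (676 * log 144) := by
  rw [nearBox, rhoG_prod, Real.volume_Icc, Real.volume_Icc, mulHaar_Icc (by norm_num) (by norm_num),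
    ← log_div (by norm_num) (by norm_num), ← ENNReal.ofReal_mul (by norm_num),
    ← ENNReal.ofReal_mul (by linarith)]
  congr 1
  norm_num
  ring

lemma mem_nearBox {b : ℝ} {x z : G} (hz : z ∈ RLset b) (hx : 0 < x.2.2)
    (hu : coshArg (gMul (gInv z) x) < 2) : x ∈ nearBox b := by
  have hz₀ := pos_of_mem_RLset hz
  obtain ⟨hz₃, hz₃'⟩ := mem_Icc_of_mem_RLset hz
  obtain ⟨⟨hz₁, hz₁'⟩, ⟨hz₂, hz₂'⟩, -⟩ := hz
  obtain ⟨⟨hy₁, hy₁'⟩, ⟨hy₂, hy₂'⟩, hy₃, hy₃'⟩ :=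
    mem_box_of_coshArg_lt_two (gMul_gInv_pos hx hz₀) hu
  have hx₁ : x.1 = z.1 + z.2.2 * (gMul (gInv z) x).1 := by
    simp only [gMul, gInv]; field_simp; ring
  have hx₂ : x.2.1 = z.2.1 + z.2.2 * (gMul (gInv z) x).2.1 := by
    simp only [gMul, gInv]; field_simp; ring
  have hx₃ : x.2.2 = z.2.2 * (gMul (gInv z) x).2.2 := by
    simp only [gMul, gInv]; field_simp
  refine ⟨⟨?_, ?_⟩, ⟨?_, ?_⟩, ?_, ?_⟩
  · rw [hx₁]; nlinarith
  · rw [hx₁]; nlinarith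
  · rw [hx₂]; nlinarith
  · rw [hx₂]; nlinarith
  · rw [hx₃]; nlinarith
  · rw [hx₃]; nlinarith

lemma setLIntegral_RLset_nearHeatK_le {t : ℝ} (ht : 0 < t) (b : ℝ) {x : G} (hx : 0 < x.2.2) :
    ∫⁻ z in RLset b, ENNReal.ofReal (nearHeatK t (gMul (gInv z) x)) ∂leftHaarG
      ≤ (nearBox b).indicator (fun _ => ENNReal.ofReal (4 * √(32 * π) ^ 3)) x := by
  by_cases hxb : x ∈ nearBox b
  · rw [indicator_of_mem hxb]
    refine (setLIntegral_le_lintegral _ _).trans ((Eq.le ?_).trans (lintegral_nearHeatK_le ht))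
    simpa using lintegral_leftHaarG_gMul_gInv (F := 1)
      (Ψ := fun y => ENNReal.ofReal (nearHeatK t y)) (by fun_prop) (by fun_prop) hx
  · refine (setLIntegral_mono' (measurableSet_RLset b) (g := 0) fun z hz => ?_).trans (by simp)
    have hu : ¬coshArg (gMul (gInv z) x) < 2 := fun hu => hxb (mem_nearBox hz hx hu)
    simp [nearHeatK, hu]

/-- Dominates the difference of `heatK t` and its translates by at most `ℓ` in the first
coordinate; see `abs_heatK_sub_le_add`. -/
def translateMajorant (t ℓ : ℝ) (y : G) : ℝ := nearHeatK t y + 11520000 * shiftMajorant ℓ y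

lemma abs_heatK_sub_le_add {t ℓ l : ℝ} (ht : 0 < t) (hℓ : 2 ≤ ℓ) (hl : |l| ≤ ℓ) {y : G}
    (hy : 0 < y.2.2) :
    |heatK t (y.1 - l, y.2) - heatK t y|
      ≤ translateMajorant t ℓ (y.1 - l, y.2) + translateMajorant t ℓ y := by
  have hfar := abs_le.1 (abs_farHeatK_sub_le ht hℓ hl hy)
  have hnear := nearHeatK_nonneg ht hy
  have hnear' : 0 ≤ nearHeatK t (y.1 - l, y.2) := nearHeatK_nonneg ht hy
  rw [← nearHeatK_add_farHeatK t y, ← nearHeatK_add_farHeatK t (y.1 - l, y.2), abs_le]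
  unfold translateMajorant
  constructor <;> linarith

lemma preimage_gMul_RLset (L : ℝ) : gMul (L, 0, 1) ⁻¹' RLset L = RLset 0 := by
  ext z
  simp only [RLset, gMul, mem_preimage, mem_prod, mem_Icc, one_mul, zero_add, zero_sub]
  exact and_congr_left fun _ => ⟨fun h => ⟨by linarith, by linarith⟩,
    fun h => ⟨by linarith, by linarith⟩⟩

lemma gMul_gInv_gMul_translation (L : ℝ) (x z : G) :
    gMul (gInv (gMul (L, 0, 1) z)) x = ((gMul (gInv z) x).1 - L / z.2.2, (gMul (gInv z) x).2) := by
  simp only [gMul, gInv, one_mul, zero_add]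
  ext <;> ring

lemma lintegral_inv_mul_enorm_indicator_RLset_le (b : ℝ) :
    ∫⁻ z, ENNReal.ofReal z.2.2⁻¹ * ‖(RLset b).indicator (fun _ => (1 : ℝ)) z‖ₑ ∂ρG ≤ 24 := by
  calc _ ≤ ∫⁻ z, (RLset b).indicator (fun _ => 3) z ∂ρG := by
        refine lintegral_mono fun z => ?_
        by_cases hz : z ∈ RLset b
        · have hinv : z.2.2⁻¹ ≤ 3 := inv_le_of_inv_le₀ three_pos
            (by simpa using (mem_Icc_of_mem_RLset hz).1)
          simpa [hz] using ENNReal.ofReal_le_ofReal hinv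
        · simp [hz]
    _ = 24 := by
        rw [lintegral_indicator_const (measurableSet_RLset b), rhoG_RLset]
        norm_num

lemma measurable_indicator_RLset (b : ℝ) :
    Measurable ((RLset b).indicator fun _ => (1 : ℝ)) :=
  measurable_const.indicator (measurableSet_RLset b)

lemma integrableOn_RLset_heatK {t : ℝ} (ht : 0 < t) (b : ℝ) {x : G} (hx : 0 < x.2.2) :
    IntegrableOn (fun z => heatK t (gMul (gInv z) x)) (RLset b) leftHaarG := by
  rw [← integrable_indicator_iff (measurableSet_RLset b)]
  refine (integrable_mul_heatK (measurable_indicator_RLset b)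
    (ne_top_of_le_ne_top (by simp) (lintegral_inv_mul_enorm_indicator_RLset_le b)) ht hx).congr
    (ae_of_all _ fun z => ?_)
  by_cases hz : z ∈ RLset b <;> simp [hz]

lemma measurable_fL (L : ℝ) : Measurable (fL L) := by
  unfold fL
  rw [← RLset_zero]
  exact (measurable_indicator_RLset L).sub (measurable_indicator_RLset 0)

lemma convHeat_fL {t : ℝ} (ht : 0 < t) (L : ℝ) {x : G} (hx : 0 < x.2.2) :
    convHeat (fL L) t x = ∫ z in RLset 0, (heatK t (gMul (gInv (gMul (L, 0, 1) z)) x)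
      - heatK t (gMul (gInv z) x)) ∂leftHaarG := by
  have htrans := measurePreserving_gMul_left (g := (L, 0, 1)) one_pos
  have hL := integrableOn_RLset_heatK ht L hx
  have h₀ := integrableOn_RLset_heatK ht 0 hx
  have hL' : IntegrableOn (fun z => heatK t (gMul (gInv (gMul (L, 0, 1) z)) x)) (RLset 0)
      leftHaarG := by
    have := (htrans.restrict_preimage (measurableSet_RLset L)).integrable_comp_of_integrable hL
    rwa [preimage_gMul_RLset] at this
  have hset : ∫ z in RLset L, heatK t (gMul (gInv z) x) ∂leftHaarG
      = ∫ z in RLset 0, heatK t (gMul (gInv (gMul (L, 0, 1) z)) x) ∂leftHaarG := by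
    have hmeas : Measurable fun z => heatK t (gMul (gInv z) x) := by fun_prop
    rw [← htrans.map_eq, setIntegral_map (measurableSet_RLset L) hmeas.aestronglyMeasurable
      htrans.measurable.aemeasurable,
      preimage_gMul_RLset, htrans.map_eq]
  rw [integral_sub hL' h₀, ← hset, convHeat_eq_integral_leftHaarG (measurable_fL L) t hx,
    ← integral_indicator (measurableSet_RLset L), ← integral_indicator (measurableSet_RLset 0),
    ← integral_sub (hL.integrable_indicator (measurableSet_RLset L))
      (h₀.integrable_indicator (measurableSet_RLset 0)), RLset_zero]
  refine integral_congr_ae (ae_of_all _ fun z => ?_)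
  by_cases hz : z ∈ RLset L <;> by_cases hz₀ : z ∈ R0set <;> simp [fL, hz, hz₀]

@[fun_prop]
lemma measurable_translateMajorant (t ℓ : ℝ) : Measurable (translateMajorant t ℓ) := by
  unfold translateMajorant; fun_prop

lemma enorm_convHeat_fL_le {t L : ℝ} (ht : 0 < t) (hL : 1 ≤ L) {x : G} (hx : 0 < x.2.2) :
    ‖convHeat (fL L) t x‖ₑ
      ≤ (∫⁻ z in RLset L, ENNReal.ofReal (translateMajorant t (3 * L) (gMul (gInv z) x)) ∂leftHaarG)
        + ∫⁻ z in RLset 0, ENNReal.ofReal (translateMajorant t (3 * L) (gMul (gInv z) x))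
          ∂leftHaarG := by
  have htrans := measurePreserving_gMul_left (g := (L, 0, 1)) one_pos
  rw [convHeat_fL ht L hx, ← htrans.setLIntegral_comp_preimage (measurableSet_RLset L)
    (by fun_prop), preimage_gMul_RLset, ← lintegral_add_right _ (by fun_prop)]
  refine (enorm_integral_le_lintegral_enorm _).trans
    (setLIntegral_mono' (measurableSet_RLset 0) fun z hz => ?_)
  have hz₀ := pos_of_mem_RLset hz
  have hy := gMul_gInv_pos hx hz₀
  have hl : |L / z.2.2| ≤ 3 * L := by
    rw [abs_of_pos (by positivity), div_le_iff₀ hz₀]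
    nlinarith [(mem_Icc_of_mem_RLset hz).1]
  rw [Real.enorm_eq_ofReal_abs, gMul_gInv_gMul_translation]
  exact (ENNReal.ofReal_le_ofReal (abs_heatK_sub_le_add ht (by linarith) hl hy)).trans
    ENNReal.ofReal_add_le

/-- Dominates `χ_{R_b} ∗ translateMajorant t ℓ` uniformly in `t`. -/
def boxMajorant (ℓ b : ℝ) (x : G) : ℝ≥0∞ :=
  (nearBox b).indicator (fun _ => ENNReal.ofReal (4 * √(32 * π) ^ 3)) x +
    ∫⁻ y, (RLset b).indicator 1 (gMul x (gInv y)) *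
      ENNReal.ofReal (11520000 * shiftMajorant ℓ y) ∂ρG

lemma measurable_indicator_one_RLset (b : ℝ) :
    Measurable ((RLset b).indicator (1 : G → ℝ≥0∞)) :=
  measurable_one.indicator (measurableSet_RLset b)

lemma measurable_boxMajorant (ℓ b : ℝ) : Measurable (boxMajorant ℓ b) := by
  have := measurable_indicator_one_RLset b
  exact (measurable_const.indicator (measurableSet_nearBox b)).add
    (Measurable.lintegral_prod_right' (f := fun p : G × G => (RLset b).indicator 1
      (gMul p.1 (gInv p.2)) * ENNReal.ofReal (11520000 * shiftMajorant ℓ p.2)) (by fun_prop))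

lemma setLIntegral_RLset_translateMajorant_le {t : ℝ} (ht : 0 < t) {ℓ : ℝ} (hℓ : 0 ≤ ℓ) (b : ℝ)
    {x : G} (hx : 0 < x.2.2) :
    ∫⁻ z in RLset b, ENNReal.ofReal (translateMajorant t ℓ (gMul (gInv z) x)) ∂leftHaarG
      ≤ boxMajorant ℓ b x := by
  have := measurable_indicator_one_RLset b
  calc _ = (∫⁻ z in RLset b, ENNReal.ofReal (nearHeatK t (gMul (gInv z) x)) ∂leftHaarG)
        + ∫⁻ z in RLset b, ENNReal.ofReal (11520000 * shiftMajorant ℓ (gMul (gInv z) x))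
          ∂leftHaarG := by
        rw [← lintegral_add_left (by fun_prop)]
        refine setLIntegral_congr_fun (measurableSet_RLset b) fun z hz => ?_
        exact ENNReal.ofReal_add (nearHeatK_nonneg ht (gMul_gInv_pos hx (pos_of_mem_RLset hz)))
          (mul_nonneg (by norm_num) (shiftMajorant_nonneg hℓ _))
    _ ≤ boxMajorant ℓ b x := by
        refine add_le_add (setLIntegral_RLset_nearHeatK_le ht b hx) (Eq.le ?_)
        rw [← lintegral_leftHaarG_gMul_gInv (Ψ := fun y =>
            ENNReal.ofReal (11520000 * shiftMajorant ℓ y)) this (by fun_prop) hx,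
          ← lintegral_indicator (measurableSet_RLset b)]
        refine lintegral_congr fun z => ?_
        by_cases hz : z ∈ RLset b <;> simp [hz]

lemma maxHeat_fL_le {L : ℝ} (hL : 1 ≤ L) {x : G} (hx : 0 < x.2.2) :
    maxHeat (fL L) x ≤ boxMajorant (3 * L) L x + boxMajorant (3 * L) 0 x := by
  refine iSup₂_le fun t ht => ?_
  rw [← Real.enorm_eq_ofReal_abs]
  have hℓ : 0 ≤ 3 * L := by linarith
  exact (enorm_convHeat_fL_le ht hL hx).trans (add_le_add
    (setLIntegral_RLset_translateMajorant_le ht hℓ L hx)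
    (setLIntegral_RLset_translateMajorant_le ht hℓ 0 hx))

lemma exists_lintegral_boxMajorant_le :
    ∃ C, 0 ≤ C ∧ ∀ ℓ > 0, ∀ b,
      ∫⁻ x, boxMajorant ℓ b x ∂ρG ≤ ENNReal.ofReal (C * (log (1 + log (1 + ℓ)) + 1)) := by
  set A := 4 * √(32 * π) ^ 3 * (676 * log 144)
  set B := 8 * (11520000 * (4 * π ^ 2))
  have hA : 0 ≤ A := by positivity
  have : 0 ≤ B := by positivity
  refine ⟨A + B, by positivity, fun ℓ hℓ b => ?_⟩
  have hlog := log_one_add_log_one_add_nonneg hℓ.le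
  calc ∫⁻ x, boxMajorant ℓ b x ∂ρG
      = ENNReal.ofReal A
        + 8 * (ENNReal.ofReal 11520000 * ∫⁻ y, ENNReal.ofReal (shiftMajorant ℓ y) ∂ρG) := by
        simp only [boxMajorant]
        rw [lintegral_add_left (measurable_const.indicator (measurableSet_nearBox b)),
          lintegral_indicator_const (measurableSet_nearBox b), rhoG_nearBox,
          ← ENNReal.ofReal_mul (by positivity),
          lintegral_lconv (measurable_indicator_one_RLset b) (by fun_prop),
          lintegral_indicator_one (measurableSet_RLset b), rhoG_RLset]
        simp only [ENNReal.ofReal_mul (show (0 : ℝ) ≤ 11520000 by norm_num)]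
        rw [lintegral_const_mul' _ _ ENNReal.ofReal_ne_top]
    _ ≤ ENNReal.ofReal A + 8 * (ENNReal.ofReal 11520000 *
          ENNReal.ofReal (4 * π ^ 2 * (log (1 + log (1 + ℓ)) + 1))) := by
        gcongr
        exact lintegral_shiftMajorant_le hℓ
    _ = ENNReal.ofReal (A + B * (log (1 + log (1 + ℓ)) + 1)) := by
        rw [← ENNReal.ofReal_mul (by norm_num), ← ENNReal.ofReal_ofNat 8,
          ← ENNReal.ofReal_mul (by norm_num), ← ENNReal.ofReal_add hA (by positivity)]
        congr 1
        ring
    _ ≤ ENNReal.ofReal ((A + B) * (log (1 + log (1 + ℓ)) + 1)) :=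
        ENNReal.ofReal_le_ofReal (by nlinarith)

/-! ### Superposition of the functions `f_L` -/

lemma enorm_fL_le (L : ℝ) (z : G) : ‖fL L z‖ₑ ≤ ‖(RLset L).indicator (fun _ => (1 : ℝ)) z‖ₑ
    + ‖(RLset 0).indicator (fun _ => (1 : ℝ)) z‖ₑ := by
  rw [RLset_zero]
  exact enorm_sub_le

lemma lintegral_inv_mul_enorm_fL_le (L : ℝ) :
    ∫⁻ z, ENNReal.ofReal z.2.2⁻¹ * ‖fL L z‖ₑ ∂ρG ≤ 48 := by
  have hmeas : Measurable fun z : G =>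
      ENNReal.ofReal z.2.2⁻¹ * ‖(RLset L).indicator (fun _ => (1 : ℝ)) z‖ₑ :=
    .mul (by fun_prop) (measurable_indicator_RLset L).enorm
  calc _ ≤ _ := lintegral_mono fun z => by grw [enorm_fL_le L z, mul_add]
    _ ≤ 24 + 24 := by
        rw [lintegral_add_left hmeas]
        exact add_le_add (lintegral_inv_mul_enorm_indicator_RLset_le L)
          (lintegral_inv_mul_enorm_indicator_RLset_le 0)
    _ = 48 := by norm_num

lemma lintegral_enorm_fL_le (L : ℝ) : ∫⁻ z, ‖fL L z‖ₑ ∂ρG ≤ 16 := by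
  have := measurable_indicator_RLset L
  have hindicator : ∀ b, ∫⁻ z, ‖(RLset b).indicator (fun _ => (1 : ℝ)) z‖ₑ ∂ρG = 8 := fun b => by
    simp only [enorm_indicator_eq_indicator_enorm]
    rw [lintegral_indicator_const (measurableSet_RLset b), rhoG_RLset]
    simp
  calc _ ≤ _ := lintegral_mono (enorm_fL_le L)
    _ = 16 := by
        rw [lintegral_add_left (by fun_prop), hindicator, hindicator]
        norm_num

lemma integrable_fL (L : ℝ) : Integrable (fL L) ρG :=
  ⟨(measurable_fL L).aestronglyMeasurable, (lintegral_enorm_fL_le L).trans_lt (by simp)⟩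

lemma integral_norm_fL_le (L : ℝ) : ∫ z, ‖fL L z‖ ∂ρG ≤ 16 := by
  rw [integral_norm_eq_lintegral_enorm (measurable_fL L).aestronglyMeasurable]
  exact ENNReal.toReal_le_of_le_ofReal (by norm_num)
    ((lintegral_enorm_fL_le L).trans_eq (by simp))

/-- The function `∑ⱼ 2⁻ʲ f_{exp (2ʲ)}`, integrable with integrable maximal function but not in
`H¹`. -/
def counterexample (z : G) : ℝ := ∑' j : ℕ, (1 / 2 : ℝ) ^ j * fL (exp (2 ^ j)) z

lemma tsum_enorm_half_pow_ne_top : ∑' j : ℕ, ‖(1 / 2 : ℝ) ^ j‖ₑ ≠ ⊤ :=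
  tsum_enorm_ne_top_iff_summable_norm.2 summable_geometric_two.norm

lemma tsum_enorm_half_pow_mul_ne_top {a : ℕ → ℝ≥0∞} {K : ℝ≥0∞} (hK : K ≠ ⊤) (ha : ∀ j, a j ≤ K) :
    ∑' j : ℕ, ‖(1 / 2 : ℝ) ^ j‖ₑ * a j ≠ ⊤ := by
  refine ne_top_of_le_ne_top (ENNReal.mul_ne_top tsum_enorm_half_pow_ne_top hK) ?_
  rw [← ENNReal.tsum_mul_right]
  gcongr with j
  exact ha j

lemma integrable_counterexample : Integrable counterexample ρG := by
  have hmeas (j : ℕ) := measurable_fL (exp (2 ^ j))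
  refine ⟨(Measurable.tsum fun j => (hmeas j).const_mul _).aestronglyMeasurable, ?_⟩
  calc ∫⁻ z, ‖counterexample z‖ₑ ∂ρG
      ≤ ∫⁻ z, ∑' j : ℕ, ‖(1 / 2 : ℝ) ^ j * fL (exp (2 ^ j)) z‖ₑ ∂ρG :=
        lintegral_mono fun z => enorm_tsum_le_tsum_enorm
    _ = ∑' j : ℕ, ‖(1 / 2 : ℝ) ^ j‖ₑ * ∫⁻ z, ‖fL (exp (2 ^ j)) z‖ₑ ∂ρG := by
        rw [lintegral_tsum fun j => by fun_prop]
        simp only [enorm_mul, lintegral_const_mul _ (hmeas _).enorm]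
    _ < ⊤ := (tsum_enorm_half_pow_mul_ne_top (by simp) fun j => lintegral_enorm_fL_le _).lt_top

lemma log_one_add_log_one_add_three_mul_exp_two_pow_le (j : ℕ) :
    log (1 + log (1 + 3 * exp (2 ^ j))) ≤ 2 + j := by
  have hlog2 : log 2 ≤ 1 := log_two_lt_d9.le.trans (by norm_num)
  have hlog4 : log 4 ≤ 2 := by
    rw [show (4 : ℝ) = 2 ^ 2 by norm_num, log_pow]
    push_cast
    linarith
  have hpow : (1 : ℝ) ≤ 2 ^ j := one_le_pow₀ one_le_two
  have hexp : (1 : ℝ) ≤ exp (2 ^ j) := one_le_exp (by positivity)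
  have hinner : log (1 + 3 * exp (2 ^ j)) ≤ 2 + 2 ^ j :=
    calc _ ≤ log (4 * exp (2 ^ j)) := log_le_log (by positivity) (by linarith)
      _ = log 4 + 2 ^ j := by rw [log_mul (by norm_num) (exp_ne_zero _), log_exp]
      _ ≤ 2 + 2 ^ j := by linarith
  calc _ ≤ log (4 * 2 ^ j) :=
        log_le_log (by linarith [log_nonneg (by linarith : 1 ≤ 1 + 3 * exp (2 ^ j))]) (by linarith)
    _ = log 4 + j * log 2 := by rw [log_mul (by norm_num) (by positivity), log_pow]
    _ ≤ 2 + j * 1 := by gcongr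
    _ = 2 + j := by rw [mul_one]

lemma exists_lintegral_boxMajorant_exp_two_pow_le :
    ∃ C, 0 ≤ C ∧ ∀ (j : ℕ) (b : ℝ),
      ∫⁻ x, boxMajorant (3 * exp (2 ^ j)) b x ∂ρG ≤ ENNReal.ofReal (C * (3 + j)) := by
  obtain ⟨C, hC, hbound⟩ := exists_lintegral_boxMajorant_le
  refine ⟨C, hC, fun j b => (hbound _ (by positivity) b).trans (ENNReal.ofReal_le_ofReal ?_)⟩
  exact mul_le_mul_of_nonneg_left
    (by linarith [log_one_add_log_one_add_three_mul_exp_two_pow_le j]) hC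

lemma tsum_enorm_half_pow_mul_three_add_ne_top (C : ℝ) :
    ∑' j : ℕ, ‖(1 / 2 : ℝ) ^ j * (C * (3 + j))‖ₑ ≠ ⊤ := by
  refine tsum_enorm_ne_top_iff_summable_norm.2 (Summable.norm ?_)
  have hlinear : Summable fun j : ℕ => (j : ℝ) ^ 1 * (1 / 2 : ℝ) ^ j :=
    summable_pow_mul_geometric_of_norm_lt_one 1 (by norm_num)
  refine ((summable_geometric_two.mul_right (3 * C)).add (hlinear.mul_right C)).congr fun j => ?_
  ring

lemma maxHeat_counterexample_le {x : G} (hx : 0 < x.2.2) :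
    maxHeat counterexample x ≤ ∑' j : ℕ, ‖(1 / 2 : ℝ) ^ j‖ₑ *
      (boxMajorant (3 * exp (2 ^ j)) (exp (2 ^ j)) x + boxMajorant (3 * exp (2 ^ j)) 0 x) := by
  have hmeas (j : ℕ) := measurable_fL (exp (2 ^ j))
  have hweight : ∑' j : ℕ, ∫⁻ z, ENNReal.ofReal z.2.2⁻¹ *
      ‖(1 / 2 : ℝ) ^ j * fL (exp (2 ^ j)) z‖ₑ ∂ρG ≠ ⊤ := by
    simp only [enorm_mul, mul_left_comm (ENNReal.ofReal _), lintegral_const_mul' _ _ enorm_ne_top]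
    exact tsum_enorm_half_pow_mul_ne_top (by simp) fun j => lintegral_inv_mul_enorm_fL_le _
  refine (maxHeat_tsum_le (fun j => (hmeas j).const_mul _) hweight hx).trans ?_
  simp only [maxHeat_const_mul]
  gcongr with j
  exact maxHeat_fL_le (one_le_exp (by positivity)) hx

lemma lintegral_maxHeat_counterexample_lt_top : ∫⁻ x, maxHeat counterexample x ∂ρG < ⊤ := by
  have (ℓ b : ℝ) := measurable_boxMajorant ℓ b
  obtain ⟨C, hC, hbound⟩ := exists_lintegral_boxMajorant_exp_two_pow_le
  calc ∫⁻ x, maxHeat counterexample x ∂ρG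
      ≤ ∫⁻ x, ∑' j : ℕ, ‖(1 / 2 : ℝ) ^ j‖ₑ * (boxMajorant (3 * exp (2 ^ j)) (exp (2 ^ j)) x
        + boxMajorant (3 * exp (2 ^ j)) 0 x) ∂ρG :=
        lintegral_rhoG_mono fun x hx => maxHeat_counterexample_le hx
    _ = ∑' j : ℕ, ‖(1 / 2 : ℝ) ^ j‖ₑ * ((∫⁻ x, boxMajorant (3 * exp (2 ^ j)) (exp (2 ^ j)) x ∂ρG)
        + ∫⁻ x, boxMajorant (3 * exp (2 ^ j)) 0 x ∂ρG) := by
        rw [lintegral_tsum fun j => by fun_prop]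
        simp only [lintegral_const_mul' _ _ enorm_ne_top,
          lintegral_add_left (measurable_boxMajorant _ _)]
    _ ≤ ∑' j : ℕ, ‖(1 / 2 : ℝ) ^ j * (2 * C * (3 + j))‖ₑ := by
        gcongr with j
        rw [enorm_mul, mul_assoc 2, two_mul (C * _), Real.enorm_eq_ofReal (r := _ + _)
          (by positivity), ENNReal.ofReal_add (by positivity) (by positivity)]
        gcongr <;> exact hbound j _
    _ < ⊤ := (tsum_enorm_half_pow_mul_three_add_ne_top _).lt_top

/-! ### Pairing with the truncated logarithm -/

lemma truncLog_nonneg {N : ℝ} (hN : 0 ≤ N) (u : ℝ) : 0 ≤ truncLog N u :=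
  log_nonneg (by linarith [le_min (abs_nonneg u) hN])

lemma truncLog_le_log_one_add_abs {N : ℝ} (hN : 0 ≤ N) (u : ℝ) : truncLog N u ≤ log (1 + |u|) :=
  log_le_log (by linarith [le_min (abs_nonneg u) hN]) (by linarith [min_le_left |u| N])

lemma log_le_truncLog {a N u : ℝ} (ha : 0 < a) (hN : a ≤ 1 + N) (hu : a ≤ 1 + |u|) :
    log a ≤ truncLog N u :=
  log_le_log ha (by linarith [le_min (by linarith : a - 1 ≤ |u|) (by linarith : a - 1 ≤ N)])

lemma rhoG_real_RLset (b : ℝ) : ρG.real (RLset b) = 8 := by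
  simp [Measure.real, rhoG_RLset]

lemma integrableOn_RLset_truncLog {N : ℝ} (hN : 0 ≤ N) (b : ℝ) :
    IntegrableOn (fun z => truncLog N z.1) (RLset b) ρG :=
  Measure.integrableOn_of_bounded (M := log (1 + N)) (by simp [rhoG_RLset])
    ((measurable_truncLog N).comp measurable_fst).aestronglyMeasurable
    (ae_of_all _ fun z => abs_truncLog_le hN z.1)

lemma mul_log_le_setIntegral_RLset_truncLog {L N : ℝ} (hL : 0 < L) (hN : 0 ≤ N) (hLN : L ≤ 1 + N) :
    8 * log L ≤ ∫ z in RLset L, truncLog N z.1 ∂ρG := by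
  rw [mul_comm, ← rhoG_real_RLset L]
  refine setIntegral_ge_of_const_le_real (measurableSet_RLset L) (by simp [rhoG_RLset])
    (fun z hz => log_le_truncLog hL hLN ?_) (integrableOn_RLset_truncLog hN L)
  linarith [hz.1.1, le_abs_self z.1]

lemma setIntegral_RLset_zero_truncLog_le {N : ℝ} (hN : 0 ≤ N) :
    ∫ z in RLset 0, truncLog N z.1 ∂ρG ≤ 8 * log 2 := by
  have hbound : ∀ z ∈ RLset 0, ‖truncLog N z.1‖ ≤ log 2 := fun z hz => by
    have hz₁ : |z.1| ≤ 1 := abs_le.2 ⟨by linarith [hz.1.1], by linarith [hz.1.2]⟩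
    rw [Real.norm_of_nonneg (truncLog_nonneg hN _)]
    exact (truncLog_le_log_one_add_abs hN _).trans (log_le_log (by positivity) (by linarith))
  have hle := norm_setIntegral_le_of_norm_le_const (μ := ρG) (by simp [rhoG_RLset]) hbound
  rw [rhoG_real_RLset, mul_comm] at hle
  exact (le_abs_self _).trans hle

lemma integral_fL_mul_truncLog {N : ℝ} (hN : 0 ≤ N) (L : ℝ) :
    ∫ z, fL L z * truncLog N z.1 ∂ρG
      = (∫ z in RLset L, truncLog N z.1 ∂ρG) - ∫ z in RLset 0, truncLog N z.1 ∂ρG := by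
  have hint (b : ℝ) :=
    (integrableOn_RLset_truncLog hN b).integrable_indicator (measurableSet_RLset b)
  rw [← integral_indicator (measurableSet_RLset L), ← integral_indicator (measurableSet_RLset 0),
    ← integral_sub (hint L) (hint 0), RLset_zero]
  refine integral_congr_ae (ae_of_all _ fun z => ?_)
  by_cases hz : z ∈ RLset L <;> by_cases hz₀ : z ∈ R0set <;> simp [fL, hz, hz₀]

lemma neg_mul_log_two_le_integral_fL_mul_truncLog {N : ℝ} (hN : 0 ≤ N) (L : ℝ) :
    -(8 * log 2) ≤ ∫ z, fL L z * truncLog N z.1 ∂ρG := by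
  have hpos : 0 ≤ ∫ z in RLset L, truncLog N z.1 ∂ρG :=
    integral_nonneg fun z => truncLog_nonneg hN z.1
  rw [integral_fL_mul_truncLog hN]
  linarith [setIntegral_RLset_zero_truncLog_le hN]

lemma mul_log_sub_le_integral_fL_mul_truncLog {L N : ℝ} (hL : 0 < L) (hN : 0 ≤ N)
    (hLN : L ≤ 1 + N) : 8 * log L - 8 * log 2 ≤ ∫ z, fL L z * truncLog N z.1 ∂ρG := by
  rw [integral_fL_mul_truncLog hN]
  linarith [mul_log_le_setIntegral_RLset_truncLog hL hN hLN, setIntegral_RLset_zero_truncLog_le hN]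

lemma hasSum_integral_counterexample_mul_truncLog {N : ℝ} (hN : 0 ≤ N) :
    HasSum (fun j : ℕ => (1 / 2 : ℝ) ^ j * ∫ z, fL (exp (2 ^ j)) z * truncLog N z.1 ∂ρG)
      (∫ z, counterexample z * truncLog N z.1 ∂ρG) := by
  have hint (L : ℝ) : Integrable (fun z => fL L z * truncLog N z.1) ρG :=
    (integrable_fL L).mul_bdd (c := log (1 + N))
      ((measurable_truncLog N).comp measurable_fst).aestronglyMeasurable
      (ae_of_all _ fun z => abs_truncLog_le hN z.1)
  have hnorm (L : ℝ) : ∫ z, ‖fL L z * truncLog N z.1‖ ∂ρG ≤ 16 * log (1 + N) :=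
    calc _ ≤ ∫ z, ‖fL L z‖ * log (1 + N) ∂ρG := by
          refine integral_mono (hint L).norm ((integrable_fL L).norm.mul_const _) fun z => ?_
          simp only [norm_mul]
          gcongr
          exact abs_truncLog_le hN z.1
      _ ≤ 16 * log (1 + N) := by
          rw [integral_mul_const]
          exact mul_le_mul_of_nonneg_right (integral_norm_fL_le L) (log_nonneg (by linarith))
  have hsummable : Summable fun j : ℕ =>
      ∫ z, ‖(1 / 2 : ℝ) ^ j * (fL (exp (2 ^ j)) z * truncLog N z.1)‖ ∂ρG := by
    refine .of_nonneg_of_le (fun j => integral_nonneg fun z => norm_nonneg _) (fun j => ?_)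
      (summable_geometric_two.mul_right (16 * log (1 + N)))
    simp only [norm_mul _ (fL _ _ * _), integral_const_mul, norm_pow,
      norm_of_nonneg one_half_pos.le]
    gcongr
    exact hnorm _
  have := hasSum_integral_of_summable_integral_norm (fun j => (hint _).const_mul _) hsummable
  simpa only [integral_const_mul, counterexample, ← tsum_mul_right, mul_assoc] using this

lemma not_memH1_counterexample : ¬MemH1 counterexample := by
  intro hH1
  obtain ⟨C, hC⟩ := hH1.exists_abs_integral_mul_truncLog_le
  obtain ⟨J, hJ⟩ := exists_nat_gt ((C + 16 * log 2) / 8)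
  set N := exp (2 ^ J)
  have hN : 0 ≤ N := (exp_pos _).le
  have hsum := (hasSum_integral_counterexample_mul_truncLog hN).add
    (hasSum_geometric_two.mul_right (8 * log 2))
  simp only [← mul_add] at hsum
  have hterm : ∀ j ∈ Finset.range J, 8 ≤ (1 / 2 : ℝ) ^ j *
      ((∫ z, fL (exp (2 ^ j)) z * truncLog N z.1 ∂ρG) + 8 * log 2) := fun j hj => by
    have hexp : exp (2 ^ j) ≤ 1 + N := by
      have : (2 : ℝ) ^ j ≤ 2 ^ J := pow_le_pow_right₀ one_le_two (Finset.mem_range.1 hj).le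
      linarith [exp_le_exp.2 this]
    have hpair := mul_log_sub_le_integral_fL_mul_truncLog (exp_pos _) hN hexp
    rw [log_exp] at hpair
    calc (8 : ℝ) = (1 / 2) ^ j * (8 * 2 ^ j) := by
          rw [mul_left_comm, ← mul_pow]
          norm_num
      _ ≤ _ := by
          gcongr
          linarith
  have hpartial := (Finset.card_nsmul_le_sum _ _ _ hterm).trans <|
    sum_le_hasSum (Finset.range J) (fun j _ => mul_nonneg (by positivity)
      (by linarith [neg_mul_log_two_le_integral_fL_mul_truncLog hN (exp (2 ^ j))])) hsum
  rw [Finset.card_range, nsmul_eq_mul] at hpartial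
  linarith [(abs_le.1 (hC N hN)).2]

theorem exists_L1_maxHeat_L1_not_H1 :
    ∃ f : G → ℝ, Integrable f ρG ∧ (∫⁻ x, maxHeat f x ∂ρG) < ⊤ ∧ ¬ MemH1 f :=
  ⟨counterexample, integrable_counterexample, lintegral_maxHeat_counterexample_lt_top,
    not_memH1_counterexample⟩
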